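/- There exists an absolute constant C > 0 such that for all real α, β ≥ 0, all n ∈ ℕ₀ and all x ∈ [−1,1], ((1−x)/2)^{α/2+1/4} ((1+x)/2)^{β/2+1/4} |P_n^{(α,β)}(x)| ≤ C (2n+α+β+1)^{−1/4} ( Γ(n+α+1) Γ(n+β+1) / ( Γ(n+1) Γ(n+α+β+1) ) )^{1/2}, where Γ is the Gamma function. -/

import Mathlib

/-- Generalized binomial coefficient `C(t, j) = t(t-1)⋯(t-j+1)/j!`. -/
noncomputable def genChoose (t : ℝ) (j : ℕ) : ℝ :=
  (∏ i ∈ Finset.range j, (t - (i : ℝ))) / (Nat.factorial j : ℝ)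

/-- Jacobi polynomial
`P_n^{(α,β)}(x) = ∑_{s=0}^n C(n+α, n-s) C(n+β, s) ((x-1)/2)^s ((x+1)/2)^{n-s}`. -/
noncomputable def jacobi (α β : ℝ) (n : ℕ) (x : ℝ) : ℝ :=
  ∑ s ∈ Finset.range (n + 1),
    genChoose ((n : ℝ) + α) (n - s) * genChoose ((n : ℝ) + β) s *
      ((x - 1) / 2) ^ s * ((x + 1) / 2) ^ (n - s)

theorem succ_mul_genChoose_succ (t : ℝ) (j : ℕ) :
    ((j : ℝ) + 1) * genChoose t (j + 1) = (t - j) * genChoose t j := by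
  unfold genChoose
  rw [Finset.prod_range_succ, Nat.factorial_succ]
  push_cast
  have : (Nat.factorial j : ℝ) ≠ 0 := by positivity
  have : (j : ℝ) + 1 ≠ 0 := by positivity
  field_simp

theorem jacobi_zero (α β x : ℝ) : jacobi α β 0 x = 1 := by
  simp [jacobi, genChoose]

theorem jacobi_neg (α β : ℝ) (n : ℕ) (x : ℝ) :
    jacobi α β n (-x) = (-1) ^ n * jacobi β α n x := by
  unfold jacobi
  rw [← Finset.sum_range_reflect, Finset.mul_sum]
  refine Finset.sum_congr rfl fun s hs => ?_
  have hs' : s ≤ n := by simpa [Nat.lt_succ_iff] using hs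
  obtain ⟨k, rfl⟩ := Nat.exists_eq_add_of_le hs'
  rw [show s + k + 1 - 1 - s = k by omega, show s + k - k = s by omega,
    show s + k - s = k by omega, show (-x - 1) / 2 = -1 * ((x + 1) / 2) by ring,
    show (-x + 1) / 2 = -1 * ((x - 1) / 2) by ring, mul_pow, mul_pow, pow_add]
  ring

theorem hasDerivAt_jacobi_termwise (α β : ℝ) (n : ℕ) (x : ℝ) :
    HasDerivAt (jacobi α β n)
      (∑ s ∈ Finset.range (n + 1), genChoose ((n : ℝ) + α) (n - s) * genChoose ((n : ℝ) + β) s *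
        (s * ((x - 1) / 2) ^ (s - 1) * (1 / 2) * ((x + 1) / 2) ^ (n - s) +
          ((x - 1) / 2) ^ s *
            (((n - s : ℕ) : ℝ) * ((x + 1) / 2) ^ (n - s - 1) * (1 / 2)))) x := by
  unfold jacobi
  refine HasDerivAt.fun_sum fun s _ => ?_
  have h1 : HasDerivAt (fun x : ℝ => (x - 1) / 2) (1 / 2) x :=
    ((hasDerivAt_id x).sub_const 1).div_const 2
  have h2 : HasDerivAt (fun x : ℝ => (x + 1) / 2) (1 / 2) x :=
    ((hasDerivAt_id x).add_const 1).div_const 2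
  exact (((h1.fun_pow s).fun_mul (h2.fun_pow (n - s))).const_mul
    (genChoose ((n : ℝ) + α) (n - s) * genChoose ((n : ℝ) + β) s)).congr_of_eventuallyEq
    (.of_forall fun z => mul_assoc _ _ _)

theorem hasDerivAt_jacobi_succ (α β : ℝ) (n : ℕ) (x : ℝ) :
    HasDerivAt (jacobi α β (n + 1))
      ((n + 2 + α + β) / 2 * jacobi (α + 1) (β + 1) n x) x := by
  have key := hasDerivAt_jacobi_termwise α β (n + 1) x
  convert key using 1
  simp only [mul_add, Finset.sum_add_distrib]
  rw [Finset.sum_range_succ' _ (n + 1), Finset.sum_range_succ _ (n + 1)]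
  simp only [jacobi, Nat.cast_zero, zero_mul, mul_zero, add_zero, Nat.sub_self]
  rw [← Finset.sum_add_distrib, Finset.mul_sum]
  refine Finset.sum_congr rfl fun s hs => ?_
  have hs' : s ≤ n := by simpa [Nat.lt_succ_iff] using hs
  obtain ⟨k, rfl⟩ := Nat.exists_eq_add_of_le hs'
  rw [show s + k - s = k by omega, show s + k + 1 - (s + 1) = k by omega,
    show s + k + 1 - s = k + 1 by omega, Nat.add_sub_cancel, Nat.add_sub_cancel]
  have e1 := succ_mul_genChoose_succ (((s + k + 1 : ℕ) : ℝ) + α) k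
  have e2 := succ_mul_genChoose_succ (((s + k + 1 : ℕ) : ℝ) + β) s
  have a1 : ((s + k : ℕ) : ℝ) + (α + 1) = ((s + k + 1 : ℕ) : ℝ) + α := by push_cast; ring
  have a2 : ((s + k : ℕ) : ℝ) + (β + 1) = ((s + k + 1 : ℕ) : ℝ) + β := by push_cast; ring
  rw [a1, a2]
  generalize genChoose (((s + k + 1 : ℕ) : ℝ) + α) (k + 1) = A1 at *
  generalize genChoose (((s + k + 1 : ℕ) : ℝ) + α) k = A0 at *
  generalize genChoose (((s + k + 1 : ℕ) : ℝ) + β) (s + 1) = B1 at *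
  generalize genChoose (((s + k + 1 : ℕ) : ℝ) + β) s = B0 at *
  push_cast at *
  linear_combination (-1 / 2 * A0 * ((x - 1) / 2) ^ s * ((x + 1) / 2) ^ k) * e2
    - (1 / 2 * B0 * ((x - 1) / 2) ^ s * ((x + 1) / 2) ^ k) * e1

/-- The derivative of `jacobi α β n`. -/
noncomputable def jacobiDeriv (α β : ℝ) : ℕ → ℝ → ℝ
  | 0, _ => 0
  | n + 1, x => (n + 2 + α + β) / 2 * jacobi (α + 1) (β + 1) n x

theorem hasDerivAt_jacobi (α β : ℝ) (n : ℕ) (x : ℝ) :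
    HasDerivAt (jacobi α β n) (jacobiDeriv α β n x) x := by
  cases n with
  | zero =>
    rw [show jacobi α β 0 = fun _ => 1 from funext (jacobi_zero α β)]
    exact hasDerivAt_const x 1
  | succ n => exact hasDerivAt_jacobi_succ α β n x

theorem jacobi_raising (α β : ℝ) (n : ℕ) (x : ℝ) :
    (1 - x ^ 2) * jacobiDeriv (α + 1) (β + 1) n x +
      (β - α - (α + β + 2) * x) * jacobi (α + 1) (β + 1) n x =
      -(2 * (n + 1)) * jacobi α β (n + 1) x := by
  have key := hasDerivAt_jacobi_termwise (α + 1) (β + 1) n x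
  rw [(hasDerivAt_jacobi (α + 1) (β + 1) n x).unique key]
  have hsplit : ((n : ℝ) + 1) * jacobi α β (n + 1) x =
      ∑ s ∈ Finset.range (n + 1 + 1), ((n + 1 - s : ℕ) : ℝ) *
        (genChoose (((n + 1 : ℕ) : ℝ) + α) (n + 1 - s) * genChoose (((n + 1 : ℕ) : ℝ) + β) s *
        ((x - 1) / 2) ^ s * ((x + 1) / 2) ^ (n + 1 - s)) +
      ∑ s ∈ Finset.range (n + 1 + 1), (s : ℝ) *
        (genChoose (((n + 1 : ℕ) : ℝ) + α) (n + 1 - s) * genChoose (((n + 1 : ℕ) : ℝ) + β) s *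
        ((x - 1) / 2) ^ s * ((x + 1) / 2) ^ (n + 1 - s)) := by
    rw [← Finset.sum_add_distrib, jacobi, Finset.mul_sum]
    refine Finset.sum_congr rfl fun s hs => ?_
    have hs' : s ≤ n + 1 := by simpa [Nat.lt_succ_iff] using hs
    rw [Nat.cast_sub hs']
    push_cast
    ring
  rw [show -(2 * ((n : ℝ) + 1)) * jacobi α β (n + 1) x =
    -2 * (((n : ℝ) + 1) * jacobi α β (n + 1) x) by ring, hsplit,
    Finset.sum_range_succ _ (n + 1), Finset.sum_range_succ' _ (n + 1)]
  simp only [jacobi, Nat.cast_zero, zero_mul, add_zero, Nat.sub_self]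
  rw [← Finset.sum_add_distrib, Finset.mul_sum, Finset.mul_sum, Finset.mul_sum,
    ← Finset.sum_add_distrib]
  refine Finset.sum_congr rfl fun s hs => ?_
  have hs' : s ≤ n := by simpa [Nat.lt_succ_iff] using hs
  obtain ⟨k, rfl⟩ := Nat.exists_eq_add_of_le hs'
  rw [show s + k - s = k by omega, show s + k + 1 - (s + 1) = k by omega,
    show s + k + 1 - s = k + 1 by omega]
  have e1 := succ_mul_genChoose_succ (((s + k + 1 : ℕ) : ℝ) + α) k
  have e2 := succ_mul_genChoose_succ (((s + k + 1 : ℕ) : ℝ) + β) s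
  have a1 : ((s + k : ℕ) : ℝ) + (α + 1) = ((s + k + 1 : ℕ) : ℝ) + α := by push_cast; ring
  have a2 : ((s + k : ℕ) : ℝ) + (β + 1) = ((s + k + 1 : ℕ) : ℝ) + β := by push_cast; ring
  rw [a1, a2]
  generalize genChoose (((s + k + 1 : ℕ) : ℝ) + α) (k + 1) = A1 at *
  generalize genChoose (((s + k + 1 : ℕ) : ℝ) + α) k = A0 at *
  generalize genChoose (((s + k + 1 : ℕ) : ℝ) + β) (s + 1) = B1 at *
  generalize genChoose (((s + k + 1 : ℕ) : ℝ) + β) s = B0 at *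
  have p1 : (s : ℝ) * ((x - 1) / 2) ^ (s - 1) * ((x - 1) / 2) = s * ((x - 1) / 2) ^ s := by
    cases s with
    | zero => simp
    | succ s => rw [Nat.add_sub_cancel]; ring
  have p2 : (k : ℝ) * ((x + 1) / 2) ^ (k - 1) * ((x + 1) / 2) = k * ((x + 1) / 2) ^ k := by
    cases k with
    | zero => simp
    | succ k => rw [Nat.add_sub_cancel]; ring
  push_cast at *
  rw [pow_succ ((x - 1) / 2), pow_succ ((x + 1) / 2)]
  generalize ((x - 1) / 2) ^ (s - 1) = X' at *
  generalize ((x + 1) / 2) ^ (k - 1) = Y' at *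
  generalize ((x - 1) / 2) ^ s = X at *
  generalize ((x + 1) / 2) ^ k = Y at *
  linear_combination (2 * A0 * X * Y * ((x - 1) / 2)) * e2 + (2 * B0 * X * Y * ((x + 1) / 2)) * e1
    - (A0 * B0 * Y * (1 + x)) * p1 + (A0 * B0 * X * (1 - x)) * p2

/-- The Jacobi weight `(1 - x) ^ α * (1 + x) ^ β`. -/
noncomputable def jacobiWeight (α β x : ℝ) : ℝ := (1 - x) ^ α * (1 + x) ^ β

theorem jacobiWeight_nonneg (α β : ℝ) {x : ℝ} (hx : x ∈ Set.Icc (-1 : ℝ) 1) :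
    0 ≤ jacobiWeight α β x :=
  mul_nonneg (Real.rpow_nonneg (by linarith [hx.2]) _) (Real.rpow_nonneg (by linarith [hx.1]) _)

theorem jacobiWeight_pos (α β : ℝ) {x : ℝ} (hx : x ∈ Set.Ioo (-1 : ℝ) 1) :
    0 < jacobiWeight α β x :=
  mul_pos (Real.rpow_pos_of_pos (by linarith [hx.2]) _)
    (Real.rpow_pos_of_pos (by linarith [hx.1]) _)

theorem continuous_jacobiWeight {α β : ℝ} (hα : 0 ≤ α) (hβ : 0 ≤ β) :
    Continuous (jacobiWeight α β) :=
  ((continuous_const.sub continuous_id).rpow_const fun _ => Or.inr hα).mul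
    ((continuous_const.add continuous_id).rpow_const fun _ => Or.inr hβ)

theorem one_sub_sq_pos {x : ℝ} (hx : x ∈ Set.Ioo (-1 : ℝ) 1) : 0 < 1 - x ^ 2 := by
  nlinarith [hx.1, hx.2]

theorem hasDerivAt_jacobiWeight (α β : ℝ) {x : ℝ} (hx : x ∈ Set.Ioo (-1 : ℝ) 1) :
    HasDerivAt (jacobiWeight α β)
      (jacobiWeight α β x * (β - α - (α + β) * x) / (1 - x ^ 2)) x := by
  have h1 : 0 < 1 - x := by linarith [hx.2]
  have h2 : 0 < 1 + x := by linarith [hx.1]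
  have d1 : HasDerivAt (fun x : ℝ => 1 - x) (-1) x := by
    simpa using (hasDerivAt_id x).const_sub 1
  have d2 : HasDerivAt (fun x : ℝ => 1 + x) 1 x := by
    simpa using (hasDerivAt_id x).const_add 1
  refine ((d1.rpow_const (p := α) (Or.inl h1.ne')).fun_mul
    (d2.rpow_const (p := β) (Or.inl h2.ne'))).congr_deriv ?_
  rw [Real.rpow_sub_one h1.ne', Real.rpow_sub_one h2.ne', jacobiWeight,
    show 1 - x ^ 2 = (1 - x) * (1 + x) by ring]
  field_simp
  ring

theorem jacobiWeight_add_one (α β : ℝ) {x : ℝ} (hx : x ∈ Set.Ioo (-1 : ℝ) 1) :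
    jacobiWeight (α + 1) (β + 1) x = (1 - x ^ 2) * jacobiWeight α β x := by
  have h1 : 1 - x ≠ 0 := by linarith [hx.2]
  have h2 : 1 + x ≠ 0 := by linarith [hx.1]
  rw [jacobiWeight, jacobiWeight, Real.rpow_add_one h1, Real.rpow_add_one h2]
  ring

theorem continuous_jacobi (α β : ℝ) (n : ℕ) : Continuous (jacobi α β n) :=
  continuous_iff_continuousAt.2 fun x => (hasDerivAt_jacobi α β n x).continuousAt

/-- The squared `L²` norm of the Jacobi polynomial with respect to its weight. -/
noncomputable def jacobiNormSq (α β : ℝ) (n : ℕ) : ℝ :=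
  ∫ x in (-1 : ℝ)..1, jacobiWeight α β x * jacobi α β n x ^ 2

theorem jacobiNormSq_succ {α β : ℝ} (hα : 0 ≤ α) (hβ : 0 ≤ β) (n : ℕ) :
    4 * (n + 1) * jacobiNormSq α β (n + 1) =
      (n + 2 + α + β) * jacobiNormSq (α + 1) (β + 1) n := by
  have c0 := continuous_jacobiWeight hα hβ
  have c1 := continuous_jacobiWeight (add_nonneg hα zero_le_one) (add_nonneg hβ zero_le_one)
  have p0 := continuous_jacobi α β (n + 1)
  have p1 := continuous_jacobi (α + 1) (β + 1) n
  have i0 : IntervalIntegrable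
      (fun x => jacobiWeight α β x * jacobi α β (n + 1) x ^ 2) MeasureTheory.volume (-1) 1 :=
    (c0.mul (p0.pow 2)).intervalIntegrable _ _
  have i1 : IntervalIntegrable
      (fun x => jacobiWeight (α + 1) (β + 1) x * jacobi (α + 1) (β + 1) n x ^ 2)
      MeasureTheory.volume (-1) 1 :=
    (c1.mul (p1.pow 2)).intervalIntegrable _ _
  have key := intervalIntegral.integral_eq_sub_of_hasDerivAt_of_le (a := (-1 : ℝ)) (b := 1)
    (f := fun x => jacobiWeight (α + 1) (β + 1) x *
      (jacobi (α + 1) (β + 1) n x * jacobi α β (n + 1) x))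
    (f' := fun x => (n + 2 + α + β) / 2 *
        (jacobiWeight (α + 1) (β + 1) x * jacobi (α + 1) (β + 1) n x ^ 2) -
      2 * (n + 1) * (jacobiWeight α β x * jacobi α β (n + 1) x ^ 2)) (by norm_num)
    (c1.mul (p1.mul p0)).continuousOn
    (fun x hx => by
      have hφ := (one_sub_sq_pos hx).ne'
      refine ((hasDerivAt_jacobiWeight (α + 1) (β + 1) hx).fun_mul
        ((hasDerivAt_jacobi (α + 1) (β + 1) n x).fun_mul
          (hasDerivAt_jacobi_succ α β n x))).congr_deriv ?_
      have r := jacobi_raising α β n x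
      rw [jacobiWeight_add_one α β hx]
      field_simp
      linear_combination (2 * jacobiWeight α β x * jacobi α β (n + 1) x) * r)
    ((i1.const_mul _).sub (i0.const_mul _))
  rw [intervalIntegral.integral_sub (i1.const_mul _) (i0.const_mul _),
    intervalIntegral.integral_const_mul, intervalIntegral.integral_const_mul] at key
  have e1 : jacobiWeight (α + 1) (β + 1) 1 = 0 := by
    simp [jacobiWeight, Real.zero_rpow (by linarith : α + 1 ≠ 0)]
  have e2 : jacobiWeight (α + 1) (β + 1) (-1) = 0 := by
    simp [jacobiWeight, Real.zero_rpow (by linarith : β + 1 ≠ 0)]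
  rw [e1, e2] at key
  simp only [jacobiNormSq]
  linear_combination (-2) * key

theorem jacobiNormSq_zero {α β : ℝ} (hα : 0 ≤ α) (hβ : 0 ≤ β) :
    jacobiNormSq α β 0 =
      2 ^ (α + β + 1) * (Real.Gamma (α + 1) * Real.Gamma (β + 1) / Real.Gamma (α + β + 2)) := by
  have hb := ProbabilityTheory.beta_eq_betaIntegralReal (α + 1) (β + 1) (by linarith) (by linarith)
  have hint : (Complex.betaIntegral ((α + 1 : ℝ) : ℂ) ((β + 1 : ℝ) : ℂ)).re =
      ∫ x in (0 : ℝ)..1, x ^ α * (1 - x) ^ β := by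
    rw [Complex.betaIntegral, ← Complex.ofReal_re (∫ x in (0 : ℝ)..1, x ^ α * (1 - x) ^ β),
      ← intervalIntegral.integral_ofReal]
    congr 1
    refine intervalIntegral.integral_congr fun x hx => ?_
    rw [Set.uIcc_of_le zero_le_one] at hx
    simp only [Complex.ofReal_add, Complex.ofReal_one, add_sub_cancel_right]
    rw [Complex.ofReal_mul, Complex.ofReal_cpow hx.1, Complex.ofReal_cpow (by linarith [hx.2])]
    simp
  have hsub := intervalIntegral.integral_comp_mul_add
    (fun x : ℝ => jacobiWeight α β x) (a := (0 : ℝ)) (b := 1) (c := -2) (by norm_num) 1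
  have hw : ∀ x ∈ Set.uIcc (0 : ℝ) 1, jacobiWeight α β (-2 * x + 1) =
      2 ^ (α + β) * (x ^ α * (1 - x) ^ β) := by
    intro x hx
    rw [Set.uIcc_of_le zero_le_one] at hx
    rw [jacobiWeight, show 1 - (-2 * x + 1) = 2 * x by ring,
      show 1 + (-2 * x + 1) = 2 * (1 - x) by ring, Real.mul_rpow (by norm_num) hx.1,
      Real.mul_rpow (by norm_num) (by linarith [hx.2]), Real.rpow_add (by norm_num)]
    ring
  rw [intervalIntegral.integral_congr hw, intervalIntegral.integral_const_mul, ← hint, ← hb,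
    ProbabilityTheory.beta, show α + 1 + (β + 1) = α + β + 2 by ring] at hsub
  rw [show -2 * (0 : ℝ) + 1 = 1 by norm_num, show -2 * (1 : ℝ) + 1 = -1 by norm_num,
    intervalIntegral.integral_symm, smul_eq_mul] at hsub
  simp only [jacobiNormSq, jacobi_zero, one_pow, mul_one]
  rw [Real.rpow_add_one (by norm_num)]
  linear_combination (-2) * hsub

theorem jacobiNormSq_eq {α β : ℝ} (hα : 0 ≤ α) (hβ : 0 ≤ β) (n : ℕ) :
    jacobiNormSq α β n = 2 ^ (α + β + 1) / (2 * n + α + β + 1) *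
      (Real.Gamma (n + α + 1) * Real.Gamma (n + β + 1) /
        (Real.Gamma (n + 1) * Real.Gamma (n + α + β + 1))) := by
  induction n generalizing α β with
  | zero =>
    have hs : α + β + 1 ≠ 0 := by positivity
    have hΓ : Real.Gamma (α + β + 1) ≠ 0 := (Real.Gamma_pos_of_pos (by positivity)).ne'
    rw [jacobiNormSq_zero hα hβ, show α + β + 2 = (α + β + 1) + 1 by ring, Real.Gamma_add_one hs]
    simp only [Nat.cast_zero, zero_add, mul_zero, Real.Gamma_one, one_mul]
    field_simp
  | succ n ih =>
    have h := jacobiNormSq_succ hα hβ n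
    rw [ih (add_nonneg hα zero_le_one) (add_nonneg hβ zero_le_one)] at h
    have hs : (n : ℝ) + α + β + 2 ≠ 0 := by positivity
    have hn : (n : ℝ) + 1 ≠ 0 := by positivity
    have hN : 2 * (n : ℝ) + α + β + 3 ≠ 0 := by positivity
    have hΓ : Real.Gamma (n + α + β + 2) ≠ 0 := (Real.Gamma_pos_of_pos (by positivity)).ne'
    have hΓ' : Real.Gamma (n + 1) ≠ 0 := (Real.Gamma_pos_of_pos (by positivity)).ne'
    rw [show (n : ℝ) + (α + 1) + (β + 1) + 1 = (n + α + β + 2) + 1 by ring,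
      Real.Gamma_add_one hs, show α + 1 + (β + 1) + 1 = (α + β + 1) + 1 + 1 by ring,
      Real.rpow_add_one (by norm_num), Real.rpow_add_one (by norm_num),
      show 2 * (n : ℝ) + (α + 1) + (β + 1) + 1 = 2 * n + α + β + 3 by ring,
      show (n : ℝ) + (α + 1) + 1 = n + α + 2 by ring,
      show (n : ℝ) + (β + 1) + 1 = n + β + 2 by ring] at h
    push_cast
    rw [Real.Gamma_add_one hn, show (n : ℝ) + 1 + α + β + 1 = n + α + β + 2 by ring,
      show 2 * ((n : ℝ) + 1) + α + β + 1 = 2 * n + α + β + 3 by ring,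
      show (n : ℝ) + 1 + α + 1 = n + α + 2 by ring,
      show (n : ℝ) + 1 + β + 1 = n + β + 2 by ring]
    apply mul_left_cancel₀ (show 4 * ((n : ℝ) + 1) ≠ 0 by positivity)
    rw [h]
    field_simp
    ring

/-- `y` is a solution, with first and second derivatives `y₁` and `y₂`, of the Jacobi differential
equation with parameters `α`, `β` and eigenvalue `ev`. -/
structure IsJacobiSolution (α β ev : ℝ) (y y₁ y₂ : ℝ → ℝ) : Prop where
  hasDerivAt : ∀ x, HasDerivAt y (y₁ x) x
  hasDerivAt' : ∀ x, HasDerivAt y₁ (y₂ x) x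
  ode : ∀ x, (1 - x ^ 2) * y₂ x + (β - α - (α + β + 2) * x) * y₁ x + ev * y x = 0

/-- Up to lower order terms, four times the potential of the Jacobi equation in Liouville normal
form, multiplied by `1 - x ^ 2`. -/
def jacobiPotential (α β ev x : ℝ) : ℝ :=
  (4 * ev + (α + β) * (α + β + 2)) * (1 - x ^ 2) - 2 * α ^ 2 * (1 + x) - 2 * β ^ 2 * (1 - x)

/-- The boundary term, divided by the weight, of the multiplier identity for squares of solutions
of the Jacobi equation. -/
def jacobiFlux (α β ev x y y₁ h h₁ h₂ : ℝ) : ℝ :=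
  h * (((β - α - (α + β) * x) ^ 2 - (1 - x ^ 2) * (α + β) + 2 * x * (β - α - (α + β) * x) -
        2 * ev * (1 - x ^ 2)) * y ^ 2 +
      (2 * (β - α - (α + β) * x) + 4 * x) * (1 - x ^ 2) * (y * y₁) +
      2 * (1 - x ^ 2) ^ 2 * y₁ ^ 2) -
    (1 - x ^ 2) * h₁ * ((β - α - (α + β) * x) * y ^ 2 + 2 * (1 - x ^ 2) * (y * y₁)) +
    (1 - x ^ 2) ^ 2 * h₂ * y ^ 2 -
    2 * x * (h * ((β - α - (α + β) * x) * y ^ 2 + 2 * (1 - x ^ 2) * (y * y₁)) +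
      (1 - x ^ 2) * h₁ * y ^ 2) +
    jacobiPotential α β ev x * h * y ^ 2

/-- The integrand of the multiplier identity for squares of solutions of the Jacobi equation. -/
def jacobiMultiplier (α β ev x h h₁ h₂ h₃ : ℝ) : ℝ :=
  (1 - x ^ 2) ^ 2 * h₃ - 6 * x * (1 - x ^ 2) * h₂ +
    (jacobiPotential α β ev x - 2 + 6 * x ^ 2) * h₁ +
    (β ^ 2 - α ^ 2 - (4 * ev + (α + β) * (α + β + 2)) * x) * h

namespace IsJacobiSolution

variable {α β ev : ℝ} {y y₁ y₂ : ℝ → ℝ}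

theorem continuous (H : IsJacobiSolution α β ev y y₁ y₂) : Continuous y :=
  continuous_iff_continuousAt.2 fun x => (H.hasDerivAt x).continuousAt

theorem continuous' (H : IsJacobiSolution α β ev y y₁ y₂) : Continuous y₁ :=
  continuous_iff_continuousAt.2 fun x => (H.hasDerivAt' x).continuousAt

theorem hasDerivAt_flux (H : IsJacobiSolution α β ev y y₁ y₂) {h h₁ h₂ : ℝ → ℝ} {h₃ x : ℝ}
    (hx : x ∈ Set.Ioo (-1 : ℝ) 1) (d0 : HasDerivAt h (h₁ x) x) (d1 : HasDerivAt h₁ (h₂ x) x)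
    (d2 : HasDerivAt h₂ h₃ x) :
    HasDerivAt (fun x => jacobiWeight α β x * jacobiFlux α β ev x (y x) (y₁ x) (h x) (h₁ x) (h₂ x))
      (jacobiWeight α β x * y x ^ 2 * jacobiMultiplier α β ev x (h x) (h₁ x) (h₂ x) h₃) x := by
  have hφ := (one_sub_sq_pos hx).ne'
  have e0 := H.hasDerivAt x
  have e1 := H.hasDerivAt' x
  have ode := H.ode x
  have dx := hasDerivAt_id x
  have dφ : HasDerivAt (fun x : ℝ => 1 - x ^ 2) (-(2 * x)) x := by
    simpa using (dx.fun_pow 2).const_sub 1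
  have dl : HasDerivAt (fun x : ℝ => β - α - (α + β) * x) (-(α + β)) x := by
    simpa using (dx.const_mul (α + β)).const_sub (β - α)
  have d2x : HasDerivAt (fun x : ℝ => 2 * x) 2 x := by simpa using dx.const_mul 2
  have d4x : HasDerivAt (fun x : ℝ => 4 * x) 4 x := by simpa using dx.const_mul 4
  have dT : HasDerivAt (jacobiPotential α β ev)
      (2 * (β ^ 2 - α ^ 2 - (4 * ev + (α + β) * (α + β + 2)) * x)) x := by
    refine (((dφ.const_mul (4 * ev + (α + β) * (α + β + 2))).fun_sub
      ((dx.const_add 1).const_mul (2 * α ^ 2))).fun_sub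
      ((dx.const_sub 1).const_mul (2 * β ^ 2))).congr_deriv ?_
    ring
  have dy2 := e0.fun_pow 2
  have dl2 := (dl.const_mul 2).fun_add d4x
  have dyy := e0.fun_mul e1
  have du := (dl.fun_mul dy2).fun_add ((dφ.const_mul 2).fun_mul dyy)
  have dA := d0.fun_mul ((((((dl.fun_pow 2).fun_sub (dφ.mul_const (α + β))).fun_add
    (d2x.fun_mul dl)).fun_sub (dφ.const_mul (2 * ev))).fun_mul dy2).fun_add
    ((dl2.fun_mul dφ).fun_mul dyy) |>.fun_add
    (((dφ.fun_pow 2).const_mul 2).fun_mul (e1.fun_pow 2)))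
  have dB := (dφ.fun_mul d1).fun_mul du
  have dC := ((dφ.fun_pow 2).fun_mul d2).fun_mul dy2
  have dD := d2x.fun_mul ((d0.fun_mul du).fun_add ((dφ.fun_mul d1).fun_mul dy2))
  have dE := (dT.fun_mul d0).fun_mul dy2
  refine ((hasDerivAt_jacobiWeight α β hx).fun_mul
    ((((dA.fun_sub dB).fun_add dC).fun_sub dD).fun_add dE)).congr_deriv ?_
  have ode' : y₂ x = -((β - α - (α + β + 2) * x) * y₁ x + ev * y x) / (1 - x ^ 2) := by
    field_simp
    linear_combination ode
  rw [ode']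
  simp only [jacobiPotential, jacobiMultiplier]
  generalize jacobiWeight α β x = w
  generalize y x = Y at *
  generalize y₁ x = Y1 at *
  generalize h x = H0 at *
  generalize h₁ x = H1 at *
  generalize h₂ x = H2 at *
  simp only [Nat.cast_ofNat]
  field_simp
  ring

theorem integral_multiplier (H : IsJacobiSolution α β ev y y₁ y₂) (hα : 0 ≤ α) (hβ : 0 ≤ β)
    {h h₁ h₂ h₃ : ℝ → ℝ} {b : ℝ} (hb : b ∈ Set.Ioc (-1 : ℝ) 1)
    (d0 : ∀ x ∈ Set.Icc (-1 : ℝ) b, HasDerivAt h (h₁ x) x)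
    (d1 : ∀ x ∈ Set.Icc (-1 : ℝ) b, HasDerivAt h₁ (h₂ x) x)
    (d2 : ∀ x ∈ Set.Icc (-1 : ℝ) b, HasDerivAt h₂ (h₃ x) x)
    (c3 : ContinuousOn h₃ (Set.Icc (-1 : ℝ) b)) :
    IntervalIntegrable (fun x => jacobiWeight α β x * y x ^ 2 *
      jacobiMultiplier α β ev x (h x) (h₁ x) (h₂ x) (h₃ x)) MeasureTheory.volume (-1) b ∧
    ∫ x in (-1 : ℝ)..b, jacobiWeight α β x * y x ^ 2 *
      jacobiMultiplier α β ev x (h x) (h₁ x) (h₂ x) (h₃ x) =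
    jacobiWeight α β b * jacobiFlux α β ev b (y b) (y₁ b) (h b) (h₁ b) (h₂ b) := by
  have cw := (continuous_jacobiWeight hα hβ).continuousOn (s := Set.Icc (-1 : ℝ) b)
  have cy := H.continuous.continuousOn (s := Set.Icc (-1 : ℝ) b)
  have cy' := H.continuous'.continuousOn (s := Set.Icc (-1 : ℝ) b)
  have c0 : ContinuousOn h (Set.Icc (-1 : ℝ) b) :=
    fun x hx => (d0 x hx).continuousAt.continuousWithinAt
  have c1 : ContinuousOn h₁ (Set.Icc (-1 : ℝ) b) :=
    fun x hx => (d1 x hx).continuousAt.continuousWithinAt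
  have c2 : ContinuousOn h₂ (Set.Icc (-1 : ℝ) b) :=
    fun x hx => (d2 x hx).continuousAt.continuousWithinAt
  have cM : ContinuousOn (fun x => jacobiWeight α β x * y x ^ 2 *
      jacobiMultiplier α β ev x (h x) (h₁ x) (h₂ x) (h₃ x)) (Set.Icc (-1 : ℝ) b) := by
    unfold jacobiMultiplier jacobiPotential
    fun_prop
  have cF : ContinuousOn (fun x => jacobiWeight α β x *
      jacobiFlux α β ev x (y x) (y₁ x) (h x) (h₁ x) (h₂ x)) (Set.Icc (-1 : ℝ) b) := by
    unfold jacobiFlux jacobiPotential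
    fun_prop
  have hint := cM.intervalIntegrable_of_Icc (μ := MeasureTheory.volume) hb.1.le
  refine ⟨hint, ?_⟩
  rw [intervalIntegral.integral_eq_sub_of_hasDerivAt_of_le hb.1.le cF (fun x hx => ?_) hint]
  · have : jacobiFlux α β ev (-1) (y (-1)) (y₁ (-1)) (h (-1)) (h₁ (-1)) (h₂ (-1)) = 0 := by
      simp only [jacobiFlux, jacobiPotential]
      ring
    rw [this, mul_zero, sub_zero]
  · have hx' := Set.Ioo_subset_Icc_self hx
    exact H.hasDerivAt_flux ⟨hx.1, hx.2.trans_le hb.2⟩ (d0 x hx') (d1 x hx') (d2 x hx')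

theorem intervalIntegrable (H : IsJacobiSolution α β ev y y₁ y₂) (hα : 0 ≤ α) (hβ : 0 ≤ β)
    {g : ℝ → ℝ} (hg : Continuous g) (a b : ℝ) :
    IntervalIntegrable (fun x => jacobiWeight α β x * y x ^ 2 * g x) MeasureTheory.volume a b :=
  (((continuous_jacobiWeight hα hβ).mul (H.continuous.pow 2)).mul hg).intervalIntegrable _ _

theorem integral_sq_sub_le (H : IsJacobiSolution α β ev y y₁ y₂) (hα : 0 ≤ α) (hβ : 0 ≤ β)
    {K c R : ℝ} (hK : K = 4 * ev + (α + β) * (α + β + 2)) (hc : K * c = β ^ 2 - α ^ 2)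
    (hT : ∀ x, jacobiPotential α β ev x = K * (R ^ 2 - (x - c) ^ 2)) :
    2 * K * ∫ x in (-1 : ℝ)..1, jacobiWeight α β x * y x ^ 2 * (x - c) ^ 2 ≤
      (K * R ^ 2 + 4) * ∫ x in (-1 : ℝ)..1, jacobiWeight α β x * y x ^ 2 := by
  have key := (H.integral_multiplier hα hβ (h := fun x => x - c) (h₁ := fun _ => 1)
    (h₂ := fun _ => 0) (h₃ := fun _ => 0) (b := 1) (by norm_num)
    (fun x _ => (hasDerivAt_id x).sub_const c) (fun x _ => hasDerivAt_const x 1)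
    (fun x _ => hasDerivAt_const x 0) continuousOn_const).2
  have hend : jacobiFlux α β ev 1 (y 1) (y₁ 1) (1 - c) 1 0 = 0 := by
    simp only [jacobiFlux, jacobiPotential]
    ring
  rw [hend, mul_zero] at key
  have i1 : IntervalIntegrable (fun x => jacobiWeight α β x * y x ^ 2) MeasureTheory.volume
      (-1) 1 := by simpa using H.intervalIntegrable hα hβ (continuous_const (y := (1 : ℝ))) (-1) 1
  have i2 := H.intervalIntegrable hα hβ (g := fun x => (x - c) ^ 2) (by fun_prop) (-1) 1
  have i3 := (H.integral_multiplier hα hβ (h := fun x => x - c) (h₁ := fun _ => 1)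
    (h₂ := fun _ => 0) (h₃ := fun _ => 0) (b := 1) (by norm_num)
    (fun x _ => (hasDerivAt_id x).sub_const c) (fun x _ => hasDerivAt_const x 1)
    (fun x _ => hasDerivAt_const x 0) continuousOn_const).1
  have hle : ∫ x in (-1 : ℝ)..1, jacobiWeight α β x * y x ^ 2 *
      jacobiMultiplier α β ev x (x - c) 1 0 0 ≤
      ∫ x in (-1 : ℝ)..1, ((K * R ^ 2 + 4) * (jacobiWeight α β x * y x ^ 2) -
        2 * K * (jacobiWeight α β x * y x ^ 2 * (x - c) ^ 2)) := by
    refine intervalIntegral.integral_mono_on (by norm_num) i3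
      ((i1.const_mul _).sub (i2.const_mul _)) fun x hx => ?_
    have hu := mul_nonneg (jacobiWeight_nonneg α β hx) (sq_nonneg (y x))
    have hm : jacobiMultiplier α β ev x (x - c) 1 0 0 ≤ K * R ^ 2 + 4 - 2 * K * (x - c) ^ 2 := by
      have hx2 : x ^ 2 ≤ 1 := by nlinarith [hx.1, hx.2]
      rw [jacobiMultiplier, hT, ← hK, ← hc]
      linarith
    linarith [mul_le_mul_of_nonneg_left hm hu]
  rw [key, intervalIntegral.integral_sub (i1.const_mul _) (i2.const_mul _),
    intervalIntegral.integral_const_mul, intervalIntegral.integral_const_mul] at hle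
  linarith

end IsJacobiSolution

theorem multiplier_remainder_nonpos {K R δ b x t : ℝ} (hb : b ∈ Set.Icc (-1 : ℝ) 1)
    (hx : x ∈ Set.Icc (-1 : ℝ) 1) (ht : t = b + δ - x) (hδ : 0 < δ) (htδ : 49 / 50 * δ ≤ t)
    (hK : 0 < K) (h100 : 100 ≤ K * R * δ) (h16 : 16 * (1 - b ^ 2) ^ 2 ≤ K * R * δ ^ 3) :
    15 / 8 * (1 - x ^ 2) ^ 2 - 9 / 2 * x * (1 - x ^ 2) * t + (3 * x ^ 2 - 1) * t ^ 2 -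
      1 / 2 * K * (δ ^ 2 + 2 * δ * R) * t ^ 2 ≤ 0 := by
  have ht0 : 0 < t := by linarith
  have hφ0 : 0 ≤ 1 - x ^ 2 := by nlinarith [hx.1, hx.2]
  have hφb : 0 ≤ 1 - b ^ 2 := by nlinarith [hb.1, hb.2]
  have hφ : 1 - x ^ 2 ≤ (1 - b ^ 2) + 2 * t := by
    have h1 : b - x ≤ t := by linarith
    have h2 : -t ≤ b - x := by linarith
    rcases le_total 0 (b - x) with h | h
    · nlinarith [hb.1, hb.2, hx.1, hx.2]
    · nlinarith [hb.1, hb.2, hx.1, hx.2]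
  set φ := 1 - x ^ 2 with hφdef
  set f := 1 - b ^ 2
  have s1 : φ ^ 2 ≤ 2 * f ^ 2 + 8 * t ^ 2 := by nlinarith [sq_nonneg (f - 2 * t)]
  have s2 : -x * φ * t ≤ φ * t := by nlinarith [mul_nonneg hφ0 ht0.le, hx.1]
  have s3 : φ * t ≤ f ^ 2 / 2 + 5 / 2 * t ^ 2 := by
    nlinarith [sq_nonneg (f - t), mul_le_mul_of_nonneg_right hφ ht0.le]
  have s4 : (3 * x ^ 2 - 1) * t ^ 2 ≤ 2 * t ^ 2 := by nlinarith [sq_nonneg t]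
  have s5 : 100 * t ^ 2 ≤ K * R * δ * t ^ 2 := by nlinarith [sq_nonneg t]
  have s6 : 24 / 25 * δ ^ 2 ≤ t ^ 2 := by nlinarith
  have s7 : 24 / 25 * (K * R * δ ^ 3) ≤ K * R * δ * t ^ 2 := by
    nlinarith [mul_le_mul_of_nonneg_left s6 (by linarith : 0 ≤ K * R * δ)]
  nlinarith [mul_nonneg hK.le (mul_nonneg (sq_nonneg δ) (sq_nonneg t))]

theorem hasDerivAt_inv_sqrt_sub_pow (a : ℝ) {x : ℝ} (hx : x < a) (k : ℕ) :
    HasDerivAt (fun x => 1 / √(a - x) ^ k) (k / 2 * (1 / √(a - x) ^ (k + 2))) x := by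
  have ht : 0 < a - x := by linarith
  have hr : 0 < √(a - x) := Real.sqrt_pos.2 ht
  have d := ((((hasDerivAt_id x).const_sub a).sqrt ht.ne').fun_pow k).inv (pow_pos hr k).ne'
  simp only [id] at d
  refine (d.congr_deriv ?_).congr_of_eventuallyEq (.of_forall fun z => by simp)
  cases k with
  | zero => simp
  | succ k =>
    rw [Nat.add_sub_cancel]
    field_simp
    ring

theorem multiplier_inv_sqrt_le {α β ev K c R δ x a : ℝ}
    (hK : K = 4 * ev + (α + β) * (α + β + 2)) (hc : K * c = β ^ 2 - α ^ 2)
    (hT : jacobiPotential α β ev x = K * (R ^ 2 - (x - c) ^ 2)) (hK0 : 0 < K)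
    (hb : c + R ∈ Set.Icc (-1 : ℝ) 1) (hx : x ∈ Set.Icc (-1 : ℝ) 1) (hδ : 0 < δ)
    (ha : a = c + R + δ) (htδ : 49 / 50 * δ ≤ a - x) (h100 : 100 ≤ K * R * δ)
    (h16 : 16 * (1 - (c + R) ^ 2) ^ 2 ≤ K * R * δ ^ 3) :
    jacobiMultiplier α β ev x (1 / √(a - x)) (1 / 2 * (1 / √(a - x) ^ 3))
      (3 / 4 * (1 / √(a - x) ^ 5)) (15 / 8 * (1 / √(a - x) ^ 7)) ≤ K / 2 * √(a - x) := by
  have ht : 0 < a - x := by linarith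
  have hr : 0 < √(a - x) := Real.sqrt_pos.2 ht
  have hrt : √(a - x) ^ 2 = a - x := Real.sq_sqrt ht.le
  have hrem := multiplier_remainder_nonpos (K := K) (R := R) (t := a - x) hb hx (by linarith) hδ htδ
    hK0 h100 h16
  set r := √(a - x) with hrdef
  have hmul : jacobiMultiplier α β ev x (1 / r) (1 / 2 * (1 / r ^ 3))
      (3 / 4 * (1 / r ^ 5)) (15 / 8 * (1 / r ^ 7)) = K / 2 * r + 1 / r ^ 7 *
      (15 / 8 * (1 - x ^ 2) ^ 2 - 9 / 2 * x * (1 - x ^ 2) * (a - x) +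
        (3 * x ^ 2 - 1) * (a - x) ^ 2 - 1 / 2 * K * (δ ^ 2 + 2 * δ * R) * (a - x) ^ 2) := by
    rw [jacobiMultiplier, hT, ← hK, ← hc, ← hrt]
    have hx' : x = c + R + δ - r ^ 2 := by linarith
    field_simp
    rw [hx']
    ring
  rw [hmul]
  have : 1 / r ^ 7 * _ ≤ 0 := mul_nonpos_of_nonneg_of_nonpos (by positivity) hrem
  linarith

theorem sqrt_sub_le {ρ t z : ℝ} (hρ : 0 < ρ) (ht : 0 ≤ t) (htz : t = ρ - z) :
    √t ≤ √ρ * (5 / 4 + z ^ 2 / (4 * ρ ^ 2)) := by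
  have hq : 0 < √ρ := Real.sqrt_pos.2 hρ
  have hqq : √ρ ^ 2 = ρ := Real.sq_sqrt hρ.le
  have hr : √t ^ 2 = t := Real.sq_sqrt ht
  have h1 : √ρ * √t ≤ (ρ + t) / 2 := by nlinarith [sq_nonneg (√ρ - √t)]
  have h2 : ρ * (5 / 4 + z ^ 2 / (4 * ρ ^ 2)) = 5 / 4 * ρ + z ^ 2 / (4 * ρ) := by
    field_simp
  have h3 : -z ≤ ρ / 2 + z ^ 2 / (2 * ρ) := by
    have : ρ / 2 + z ^ 2 / (2 * ρ) + z = (ρ + z) ^ 2 / (2 * ρ) := by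
      field_simp
      ring
    have : 0 ≤ (ρ + z) ^ 2 / (2 * ρ) := by positivity
    linarith
  have h4 : z ^ 2 / (2 * ρ) = 2 * (z ^ 2 / (4 * ρ)) := by
    field_simp
    norm_num
  refine le_of_mul_le_mul_left ?_ hq
  rw [← mul_assoc, ← sq, hqq, h2]
  linarith

namespace IsJacobiSolution

variable {α β ev : ℝ} {y y₁ y₂ : ℝ → ℝ}

theorem weight_mul_flux_le (H : IsJacobiSolution α β ev y y₁ y₂) (hα : 0 ≤ α) (hβ : 0 ≤ β)
    {K c R δ x₀ a : ℝ} (hK : K = 4 * ev + (α + β) * (α + β + 2)) (hc : K * c = β ^ 2 - α ^ 2)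
    (hT : ∀ x, jacobiPotential α β ev x = K * (R ^ 2 - (x - c) ^ 2)) (hK0 : 0 < K) (hR : 0 < R)
    (hb : c + R ∈ Set.Icc (-1 : ℝ) 1) (hx₀ : x₀ ∈ Set.Ioo (-1 : ℝ) 1) (hδ : 0 < δ)
    (ha : a = c + R + δ) (htδ : 49 / 50 * δ ≤ a - x₀) (h100 : 100 ≤ K * R * δ)
    (h16 : 16 * (1 - (c + R) ^ 2) ^ 2 ≤ K * R * δ ^ 3) :
    jacobiWeight α β x₀ * jacobiFlux α β ev x₀ (y x₀) (y₁ x₀) (1 / √(a - x₀))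
      (1 / 2 * (1 / √(a - x₀) ^ 3)) (3 / 4 * (1 / √(a - x₀) ^ 5)) ≤
    K * √(R + δ) * ∫ x in (-1 : ℝ)..1, jacobiWeight α β x * y x ^ 2 := by
  have hlt : ∀ x ∈ Set.Icc (-1 : ℝ) x₀, x < a := fun x hx => by linarith [hx.2]
  have hρ : 0 < R + δ := by linarith
  have key := H.integral_multiplier hα hβ (h := fun x => 1 / √(a - x))
    (h₁ := fun x => 1 / 2 * (1 / √(a - x) ^ 3)) (h₂ := fun x => 3 / 4 * (1 / √(a - x) ^ 5))
    (h₃ := fun x => 15 / 8 * (1 / √(a - x) ^ 7)) (b := x₀) ⟨hx₀.1, hx₀.2.le⟩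
    (fun x hx => by
      have := hasDerivAt_inv_sqrt_sub_pow a (hlt x hx) 1
      norm_num at this ⊢
      exact this)
    (fun x hx => ((hasDerivAt_inv_sqrt_sub_pow a (hlt x hx) 3).const_mul _).congr_deriv (by
      push_cast; ring))
    (fun x hx => ((hasDerivAt_inv_sqrt_sub_pow a (hlt x hx) 5).const_mul _).congr_deriv (by
      push_cast; ring))
    (fun x hx => ((hasDerivAt_inv_sqrt_sub_pow a
      (hlt x hx) 7).const_mul _).continuousAt.continuousWithinAt)
  have i1 : IntervalIntegrable (fun x => jacobiWeight α β x * y x ^ 2) MeasureTheory.volume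
      (-1) 1 := by simpa using H.intervalIntegrable hα hβ (continuous_const (y := (1 : ℝ))) (-1) 1
  have i2 := H.intervalIntegrable hα hβ (g := fun x => (x - c) ^ 2) (by fun_prop) (-1) 1
  have cg : Continuous fun x : ℝ =>
      K / 2 * (√(R + δ) * (5 / 4 + (x - c) ^ 2 / (4 * (R + δ) ^ 2))) := by fun_prop
  rw [← key.2]
  set I := ∫ x in (-1 : ℝ)..1, jacobiWeight α β x * y x ^ 2 with hI
  have hI0 : 0 ≤ I := intervalIntegral.integral_nonneg (by norm_num) fun x hx =>
    mul_nonneg (jacobiWeight_nonneg α β hx) (sq_nonneg _)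
  calc _ ≤ ∫ x in (-1 : ℝ)..x₀, jacobiWeight α β x * y x ^ 2 *
        (K / 2 * (√(R + δ) * (5 / 4 + (x - c) ^ 2 / (4 * (R + δ) ^ 2)))) := by
        refine intervalIntegral.integral_mono_on hx₀.1.le key.1
          (H.intervalIntegrable hα hβ cg _ _) fun x hx => ?_
        have hx' : x ∈ Set.Icc (-1 : ℝ) 1 := ⟨hx.1, hx.2.trans hx₀.2.le⟩
        refine mul_le_mul_of_nonneg_left ?_
          (mul_nonneg (jacobiWeight_nonneg α β hx') (sq_nonneg _))
        refine (multiplier_inv_sqrt_le hK hc (hT x) hK0 hb hx' hδ ha (by linarith [hx.2]) h100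
          h16).trans ?_
        exact mul_le_mul_of_nonneg_left
          (sqrt_sub_le hρ (by linarith [hlt x hx]) (by rw [ha]; ring)) (by linarith)
    _ ≤ ∫ x in (-1 : ℝ)..1, jacobiWeight α β x * y x ^ 2 *
        (K / 2 * (√(R + δ) * (5 / 4 + (x - c) ^ 2 / (4 * (R + δ) ^ 2)))) := by
        refine intervalIntegral.integral_mono_interval le_rfl hx₀.1.le hx₀.2.le ?_
          (H.intervalIntegrable hα hβ cg _ _)
        filter_upwards [MeasureTheory.ae_restrict_mem measurableSet_Ioc] with x hx
        have hx' : x ∈ Set.Icc (-1 : ℝ) 1 := Set.Ioc_subset_Icc_self hx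
        exact mul_nonneg (mul_nonneg (jacobiWeight_nonneg α β hx') (sq_nonneg _)) (by positivity)
    _ = K * √(R + δ) * (5 / 8 * I + 1 / (8 * (R + δ) ^ 2) *
        ∫ x in (-1 : ℝ)..1, jacobiWeight α β x * y x ^ 2 * (x - c) ^ 2) := by
        rw [hI, ← intervalIntegral.integral_const_mul, ← intervalIntegral.integral_const_mul,
          ← intervalIntegral.integral_add (i1.const_mul _) (i2.const_mul _),
          ← intervalIntegral.integral_const_mul]
        refine intervalIntegral.integral_congr fun x _ => ?_
        field_simp
        ring
    _ ≤ K * √(R + δ) * I := by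
        refine mul_le_mul_of_nonneg_left ?_ (by positivity)
        have hm := H.integral_sq_sub_le hα hβ hK hc hT
        rw [← hI] at hm
        set J := ∫ x in (-1 : ℝ)..1, jacobiWeight α β x * y x ^ 2 * (x - c) ^ 2
        have hJ : J ≤ (R + δ) ^ 2 * I := by
          have : (K * R ^ 2 + 4) * I ≤ 2 * K * ((R + δ) ^ 2 * I) := by
            have : K * R ^ 2 + 4 ≤ 2 * K * (R + δ) ^ 2 := by
              nlinarith [mul_pos hK0 (pow_pos hR 2), mul_pos hK0 (pow_pos hδ 2)]
            calc _ ≤ 2 * K * (R + δ) ^ 2 * I := mul_le_mul_of_nonneg_right this hI0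
              _ = _ := by ring
          exact le_of_mul_le_mul_left (hm.trans this) (by linarith)
        have : 1 / (8 * (R + δ) ^ 2) * J ≤ 1 / 8 * I := by
          rw [div_mul_eq_mul_div, one_mul, div_le_iff₀ (by positivity)]
          linarith
        linarith

theorem critical_of_isMax (H : IsJacobiSolution α β ev y y₁ y₂)
    {x₀ : ℝ} (hx₀ : x₀ ∈ Set.Ioo (-1 : ℝ) 1)
    (hmax : ∀ x ∈ Set.Ioo (-1 : ℝ) 1, jacobiWeight (α + 1 / 2) (β + 1 / 2) x * y x ^ 2 ≤
      jacobiWeight (α + 1 / 2) (β + 1 / 2) x₀ * y x₀ ^ 2) (hy : y x₀ ≠ 0) :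
    2 * (1 - x₀ ^ 2) * y₁ x₀ = (x₀ - (β - α - (α + β) * x₀)) * y x₀ := by
  have hφ := one_sub_sq_pos hx₀
  have hp : HasDerivAt (fun x => jacobiWeight (α + 1 / 2) (β + 1 / 2) x * y x ^ 2)
      (jacobiWeight (α + 1 / 2) (β + 1 / 2) x₀ / (1 - x₀ ^ 2) *
        ((β - α - (α + β + 1) * x₀) * y x₀ ^ 2 + 2 * (1 - x₀ ^ 2) * (y x₀ * y₁ x₀))) x₀ := by
    refine ((hasDerivAt_jacobiWeight _ _ hx₀).fun_mul
      ((H.hasDerivAt x₀).fun_pow 2)).congr_deriv ?_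
    field_simp
    push_cast
    ring
  have hloc : IsLocalMax (fun x => jacobiWeight (α + 1 / 2) (β + 1 / 2) x * y x ^ 2) x₀ := by
    filter_upwards [Ioo_mem_nhds hx₀.1 hx₀.2] with x hx using hmax x hx
  have hw : 0 < jacobiWeight (α + 1 / 2) (β + 1 / 2) x₀ / (1 - x₀ ^ 2) :=
    div_pos (jacobiWeight_pos _ _ hx₀) hφ
  have h0 := (mul_eq_zero.1 (hloc.hasDerivAt_eq_zero hp)).resolve_left hw.ne'
  refine mul_left_cancel₀ hy ?_
  linear_combination h0

/-- A multiplier for which the integrand is nonpositive to the right of `x₀` has nonnegative flux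
at `x₀`, as soon as its flux vanishes at the right endpoint. -/
theorem flux_nonneg (H : IsJacobiSolution α β ev y y₁ y₂) {h h₁ h₂ h₃ : ℝ → ℝ} {x₀ : ℝ}
    (hx₀ : x₀ ∈ Set.Ioo (-1 : ℝ) 1) (d0 : ∀ x ∈ Set.Ico x₀ 1, HasDerivAt h (h₁ x) x)
    (d1 : ∀ x ∈ Set.Ico x₀ 1, HasDerivAt h₁ (h₂ x) x)
    (d2 : ∀ x ∈ Set.Ico x₀ 1, HasDerivAt h₂ (h₃ x) x)
    (hneg : ∀ x ∈ Set.Ico x₀ 1, jacobiMultiplier α β ev x (h x) (h₁ x) (h₂ x) (h₃ x) ≤ 0)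
    (hlim : Filter.Tendsto (fun x => jacobiWeight α β x *
      jacobiFlux α β ev x (y x) (y₁ x) (h x) (h₁ x) (h₂ x)) (nhdsWithin 1 (Set.Iio 1)) (nhds 0)) :
    0 ≤ jacobiFlux α β ev x₀ (y x₀) (y₁ x₀) (h x₀) (h₁ x₀) (h₂ x₀) := by
  have hd : ∀ x ∈ Set.Ico x₀ 1, HasDerivAt _ _ x := fun x hx =>
    H.hasDerivAt_flux ⟨hx₀.1.trans_le hx.1, hx.2⟩ (d0 x hx) (d1 x hx) (d2 x hx)
  have hanti := antitoneOn_of_deriv_nonpos (convex_Ico x₀ 1)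
    (fun x hx => (hd x hx).continuousAt.continuousWithinAt)
    (fun x hx => (hd x (interior_subset hx)).differentiableAt.differentiableWithinAt)
    (fun x hx => by
      have hx' := interior_subset hx
      rw [(hd x hx').deriv]
      exact mul_nonpos_of_nonneg_of_nonpos (mul_nonneg
        (jacobiWeight_pos α β ⟨hx₀.1.trans_le hx'.1, hx'.2⟩).le (sq_nonneg _)) (hneg x hx'))
  have hF : 0 ≤ jacobiWeight α β x₀ *
      jacobiFlux α β ev x₀ (y x₀) (y₁ x₀) (h x₀) (h₁ x₀) (h₂ x₀) := by
    refine le_of_tendsto hlim ?_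
    filter_upwards [Ioo_mem_nhdsLT hx₀.2] with x hx
    exact hanti (Set.left_mem_Ico.2 hx₀.2) ⟨hx.1.le, hx.2⟩ hx.1.le
  exact nonneg_of_mul_nonneg_right hF (jacobiWeight_pos α β hx₀)

end IsJacobiSolution

theorem jacobiFlux_of_critical {α β ev x y y₁ : ℝ} (h h₁ h₂ : ℝ)
    (hcrit : 2 * (1 - x ^ 2) * y₁ = (x - (β - α - (α + β) * x)) * y) :
    jacobiFlux α β ev x y y₁ h h₁ h₂ =
      y ^ 2 * ((jacobiPotential α β ev x + x ^ 2) / 2 * h - 3 * x * (1 - x ^ 2) * h₁ +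
        (1 - x ^ 2) ^ 2 * h₂) := by
  have e2 : 2 * (1 - x ^ 2) ^ 2 * y₁ ^ 2 = ((x - (β - α - (α + β) * x)) * y) ^ 2 / 2 := by
    rw [← hcrit]
    ring
  have e1 : (1 - x ^ 2) * (y * y₁) = (x - (β - α - (α + β) * x)) * y ^ 2 / 2 := by
    linear_combination y / 2 * hcrit
  rw [jacobiFlux, mul_assoc _ (1 - x ^ 2) (y * y₁), e2, mul_assoc 2 (1 - x ^ 2) (y * y₁), e1,
    jacobiPotential]
  ring

theorem jacobiFlux_one (α β ev y y₁ h h₁ h₂ : ℝ) : jacobiFlux α β ev 1 y y₁ h h₁ h₂ = 0 := by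
  rw [jacobiFlux, jacobiPotential]
  ring

namespace IsJacobiSolution

variable {α β ev : ℝ} {y y₁ y₂ : ℝ → ℝ} {K c R x₀ : ℝ}

/-- At a critical point right of the centre, the potential dominates a positive multiple of
`x₀ * (1 - x₀ ^ 2)`. -/
theorem potential_of_critical_linear (H : IsJacobiSolution α β ev y y₁ y₂) (hα : 0 ≤ α)
    (hβ : 0 ≤ β) (hK : K = 4 * ev + (α + β) * (α + β + 2)) (hc : K * c = β ^ 2 - α ^ 2)
    (hT : ∀ x, jacobiPotential α β ev x = K * (R ^ 2 - (x - c) ^ 2)) (hK0 : 0 < K)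
    (hx₀ : x₀ ∈ Set.Ioo (-1 : ℝ) 1) (hcx : c ≤ x₀) (hy : y x₀ ≠ 0)
    (hcrit : 2 * (1 - x₀ ^ 2) * y₁ x₀ = (x₀ - (β - α - (α + β) * x₀)) * y x₀)
    {κ : ℝ} (hκ : 0 ≤ κ) (hκT : κ * (K * (R ^ 2 - (x₀ - c) ^ 2) + 4) ≤ K * (x₀ - c)) :
    6 * x₀ * (1 - x₀ ^ 2) * κ ≤ K * (R ^ 2 - (x₀ - c) ^ 2) + x₀ ^ 2 := by
  have dx := fun x => hasDerivAt_id (𝕜 := ℝ) x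
  have key := H.flux_nonneg (h := fun x => 1 + κ * (x - x₀)) (h₁ := fun _ => κ) (h₂ := fun _ => 0)
    (h₃ := fun _ => 0) hx₀ (fun x _ => by simpa using (((dx x).sub_const x₀).const_mul κ).const_add 1)
    (fun x _ => hasDerivAt_const _ _) (fun x _ => hasDerivAt_const _ _)
    (fun x hx => by
      rw [jacobiMultiplier, hT, ← hK, ← hc]
      have h1 : (x₀ - c) ^ 2 ≤ (x - c) ^ 2 := by nlinarith [hx.1]
      have h2 : x ^ 2 ≤ 1 := by nlinarith [hx.1, hx.2, hx₀.1]
      have h3 : κ * (K * (R ^ 2 - (x - c) ^ 2) - 2 + 6 * x ^ 2) ≤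
          κ * (K * (R ^ 2 - (x₀ - c) ^ 2) + 4) :=
        mul_le_mul_of_nonneg_left (by nlinarith [mul_le_mul_of_nonneg_left h1 hK0.le]) hκ
      have h4 : K * (x₀ - c) ≤ K * (x - c) := mul_le_mul_of_nonneg_left (by linarith [hx.1]) hK0.le
      have h5 : 0 ≤ K * (x - c) * (κ * (x - x₀)) :=
        mul_nonneg (mul_nonneg hK0.le (by linarith [hx.1])) (mul_nonneg hκ (by linarith [hx.1]))
      nlinarith) (by
      have hcont : Continuous fun x => jacobiWeight α β x * jacobiFlux α β ev x (y x) (y₁ x)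
          (1 + κ * (x - x₀)) κ 0 := by
        have := H.continuous
        have := H.continuous'
        have := continuous_jacobiWeight hα hβ
        unfold jacobiFlux jacobiPotential
        fun_prop
      have := (hcont.tendsto 1).mono_left (nhdsWithin_le_nhds (s := Set.Iio 1))
      rwa [jacobiFlux_one, mul_zero] at this)
  rw [jacobiFlux_of_critical _ _ _ hcrit, hT] at key
  have := nonneg_of_mul_nonneg_right key (by positivity)
  norm_num at this
  linarith

/-- Near the right endpoint, the potential at a critical point is bounded away from `-1`. -/
theorem potential_of_critical_near_one (H : IsJacobiSolution α β ev y y₁ y₂) (hα : 1 / 4 < α)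
    (hβ : 0 ≤ β) (hK : K = 4 * ev + (α + β) * (α + β + 2)) (hc : K * c = β ^ 2 - α ^ 2)
    (hT : ∀ x, jacobiPotential α β ev x = K * (R ^ 2 - (x - c) ^ 2)) (hK0 : 0 < K)
    (hx₀ : x₀ ∈ Set.Ico (24 / 25 : ℝ) 1) (hcx : 1 - x₀ ≤ x₀ - c) (hy : y x₀ ≠ 0)
    (hcrit : 2 * (1 - x₀ ^ 2) * y₁ x₀ = (x₀ - (β - α - (α + β) * x₀)) * y x₀) :
    3 / 10 ≤ K * (R ^ 2 - (x₀ - c) ^ 2) + x₀ ^ 2 := by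
  have hx₀' : x₀ ∈ Set.Ioo (-1 : ℝ) 1 := ⟨by linarith [hx₀.1], hx₀.2⟩
  have d : ∀ (p : ℝ) {x : ℝ}, x < 1 →
      HasDerivAt (fun x : ℝ => (1 - x) ^ (-p)) (p * (1 - x) ^ (-(p + 1))) x := fun p x hx => by
    have := ((hasDerivAt_id x).const_sub 1).rpow_const (p := -p) (Or.inl (sub_pos.2 hx).ne')
    simp only [id] at this
    refine this.congr_deriv ?_
    rw [show -(p + 1) = -p - 1 by ring]
    ring
  have e1 : ∀ {x : ℝ} (p : ℝ), x < 1 → (1 - x) ^ (-(p + 1)) = (1 - x) ^ (-p) / (1 - x) :=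
    fun p hx => by rw [show -(p + 1) = -p - 1 by ring, Real.rpow_sub_one (sub_pos.2 hx).ne']
  have key := H.flux_nonneg (h := fun x => (1 - x) ^ (-(1 / 4 : ℝ)))
    (h₁ := fun x => 1 / 4 * (1 - x) ^ (-(1 / 4 + 1 : ℝ)))
    (h₂ := fun x => 1 / 4 * ((1 / 4 + 1) * (1 - x) ^ (-(1 / 4 + 1 + 1 : ℝ))))
    (h₃ := fun x => 1 / 4 * ((1 / 4 + 1) * ((1 / 4 + 1 + 1) * (1 - x) ^ (-(1 / 4 + 1 + 1 + 1 : ℝ)))))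
    hx₀' (fun x hx => d _ hx.2) (fun x hx => (d _ hx.2).const_mul _)
    (fun x hx => ((d _ hx.2).const_mul _).const_mul _)
    (fun x hx => by
      have hT1 := hT 1
      rw [jacobiPotential] at hT1
      have hs : 0 < 1 - x := sub_pos.2 hx.2
      rw [e1 (1 / 4 + 1 + 1) hx.2, e1 (1 / 4 + 1) hx.2, e1 (1 / 4) hx.2, jacobiMultiplier, hT,
        ← hK, ← hc]
      have hη : 0 < (1 - x) ^ (-(1 / 4 : ℝ)) := Real.rpow_pos_of_pos hs _
      generalize (1 - x) ^ (-(1 / 4 : ℝ)) = η at hη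
      have : (1 - x ^ 2) ^ 2 * (1 / 4 * ((1 / 4 + 1) * ((1 / 4 + 1 + 1) *
            (η / (1 - x) / (1 - x) / (1 - x))))) -
          6 * x * (1 - x ^ 2) * (1 / 4 * ((1 / 4 + 1) * (η / (1 - x) / (1 - x)))) +
          (K * (R ^ 2 - (x - c) ^ 2) - 2 + 6 * x ^ 2) * (1 / 4 * (η / (1 - x))) +
          (K * c - K * x) * η = η / (4 * (1 - x)) *
          ((1 / 4 - 4 * α ^ 2) + K * (1 - x) * ((1 - x) - 2 * (x - c)) +
            (1 - x) * (21 / 16 * (1 - x) - 3 / 4)) := by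
        have hT2 : K * R ^ 2 = K * (1 - c) ^ 2 - 4 * α ^ 2 := by linarith
        rw [mul_sub K (R ^ 2), hT2]
        field_simp
        ring
      rw [this]
      refine mul_nonpos_of_nonneg_of_nonpos (by positivity) ?_
      have h1 : 0 ≤ K * (1 - x) * (2 * (x - c) - (1 - x)) :=
        mul_nonneg (mul_nonneg hK0.le hs.le) (by linarith [hx.1])
      have h2 : 0 ≤ (1 - x) * (3 / 4 - 21 / 16 * (1 - x)) :=
        mul_nonneg hs.le (by linarith [hx.1, hx₀.1])
      nlinarith)
    (by
      have hcont : Continuous fun x => jacobiWeight (α - 1 / 4) β x *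
          (((β - α - (α + β) * x) ^ 2 - (1 - x ^ 2) * (α + β) + 2 * x * (β - α - (α + β) * x) -
              2 * ev * (1 - x ^ 2)) * y x ^ 2 +
            (2 * (β - α - (α + β) * x) + 4 * x) * (1 - x ^ 2) * (y x * y₁ x) +
            2 * (1 - x ^ 2) ^ 2 * y₁ x ^ 2 -
            (1 + x) * (1 / 4) * ((β - α - (α + β) * x) * y x ^ 2 + 2 * (1 - x ^ 2) * (y x * y₁ x)) +
            (1 + x) ^ 2 * (5 / 16) * y x ^ 2 -
            2 * x * (((β - α - (α + β) * x) * y x ^ 2 + 2 * (1 - x ^ 2) * (y x * y₁ x)) +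
              (1 + x) * (1 / 4) * y x ^ 2) +
            jacobiPotential α β ev x * y x ^ 2) := by
        have := H.continuous
        have := H.continuous'
        have := continuous_jacobiWeight (α := α - 1 / 4) (β := β) (by linarith) hβ
        unfold jacobiPotential
        fun_prop
      have hl := (hcont.tendsto 1).mono_left (nhdsWithin_le_nhds (s := Set.Iio 1))
      have h0 : jacobiWeight (α - 1 / 4) β 1 = 0 := by
        rw [jacobiWeight, sub_self, Real.zero_rpow (by linarith), zero_mul]
      rw [h0, zero_mul] at hl
      refine hl.congr' ?_
      filter_upwards [self_mem_nhdsWithin] with x hx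
      have hs : 0 < 1 - x := sub_pos.2 hx
      rw [e1 (1 / 4 + 1) hx, e1 (1 / 4) hx, jacobiFlux, jacobiWeight, jacobiWeight,
        sub_eq_add_neg α, Real.rpow_add hs]
      field_simp
      ring)
  rw [jacobiFlux_of_critical _ _ _ hcrit, hT] at key
  have hk := nonneg_of_mul_nonneg_right key (by positivity)
  have hs : 0 < 1 - x₀ := sub_pos.2 hx₀.2
  rw [e1 (1 / 4 + 1) hx₀.2, e1 (1 / 4) hx₀.2] at hk
  have hη : 0 < (1 - x₀) ^ (-(1 / 4 : ℝ)) := Real.rpow_pos_of_pos hs _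
  generalize (1 - x₀) ^ (-(1 / 4 : ℝ)) = η at hη hk
  generalize K * (R ^ 2 - (x₀ - c) ^ 2) = T at hk ⊢
  have : (T + x₀ ^ 2) / 2 * η - 3 * x₀ * (1 - x₀ ^ 2) * (1 / 4 * (η / (1 - x₀))) +
      (1 - x₀ ^ 2) ^ 2 * (1 / 4 * ((1 / 4 + 1) * (η / (1 - x₀) / (1 - x₀)))) =
      η * ((T + x₀ ^ 2) / 2 - 3 / 4 * x₀ * (1 + x₀) + 5 / 16 * (1 + x₀) ^ 2) := by
    field_simp
    ring
  rw [this] at hk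
  have := nonneg_of_mul_nonneg_right hk hη
  nlinarith [hx₀.1, hx₀.2]

end IsJacobiSolution

/-- The quadratic form giving the flux of an inverse square root multiplier at a critical point. -/
noncomputable def fluxForm (T x t : ℝ) : ℝ :=
  T * t ^ 2 / 2 + 3 / 4 * (1 - x ^ 2) ^ 2 - 3 / 2 * x * (1 - x ^ 2) * t + x ^ 2 * t ^ 2 / 2

theorem fluxForm_ge (T x t : ℝ) (hx : x ^ 2 ≤ 1) : T * t ^ 2 / 2 - t ^ 2 / 4 ≤ fluxForm T x t := by
  have : fluxForm T x t =
      T * t ^ 2 / 2 - x ^ 2 * t ^ 2 / 4 + 3 / 4 * (1 - x ^ 2 - x * t) ^ 2 := by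
    rw [fluxForm]; ring
  rw [this]
  nlinarith [sq_nonneg (1 - x ^ 2 - x * t), mul_le_mul_of_nonneg_right hx (sq_nonneg t)]

theorem one_sub_sq_le {b x : ℝ} (hb : b ∈ Set.Icc (-1 : ℝ) 1) (hx : x ∈ Set.Icc (-1 : ℝ) 1) :
    1 - x ^ 2 ≤ 1 - b ^ 2 + 2 * |b - x| := by
  have h1 : (b - x) * (b + x) ≤ |b - x| * 2 := by
    refine (le_abs_self _).trans ?_
    rw [abs_mul]
    exact mul_le_mul_of_nonneg_left
      (abs_le.2 ⟨by linarith [hb.1, hx.1], by linarith [hb.2, hx.2]⟩) (abs_nonneg _)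
  linarith

theorem near_one_of_one_sub_sq_small {K R c x : ℝ} (hR : 0 < R) (hR1 : R ≤ 1) (hK : 0 < K)
    (hKR : 4 / 3 ≤ K * R ^ 2) (hc : -1 ≤ c) (hX : R / 2 ≤ x - c) (hx : x ≤ 1)
    (hb : (1 - x ^ 2) * (K * R) < 1 / 10) : 24 / 25 ≤ x ∧ 1 - x ≤ x - c := by
  have b1 : 1 - x ^ 2 ≤ 3 / 40 * R := by
    by_contra! h
    have h1 := mul_le_mul_of_nonneg_right h.le (mul_pos hK hR).le
    have h2 : 3 / 40 * R * (K * R) = 3 / 40 * (K * R ^ 2) := by ring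
    linarith
  have hx0 : 0 < x := by
    by_contra! h
    have : x * (1 + x) ≤ 0 := mul_nonpos_of_nonpos_of_nonneg h (by linarith)
    linarith
  have h1 : 0 ≤ x * (1 - x) := mul_nonneg hx0.le (by linarith)
  refine ⟨?_, by linarith⟩
  by_contra! h
  have : x ^ 2 ≤ (24 / 25) ^ 2 := pow_le_pow_left₀ hx0.le h.le 2
  linarith

theorem fluxForm_ge_of_far {K R δ T x t : ℝ} (hK : 0 < K) (hR : 0 < R) (hδ : 0 < δ)
    (hx : x ^ 2 ≤ 1) (hT : T = K * (t - δ) * (2 * R + δ - t)) (ht : 2 * δ ≤ t) (htR : t ≤ R + δ)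
    (h100 : 100 ≤ K * R * δ) : K * R * t ^ 3 / 8 ≤ fluxForm T x t := by
  refine le_trans ?_ (fluxForm_ge T x t hx)
  have h1 : K * R * t / 2 ≤ T := by
    have h : t / 2 * R ≤ (t - δ) * (2 * R + δ - t) :=
      mul_le_mul (by linarith) (by linarith) hR.le (by linarith)
    rw [hT, mul_assoc]
    nlinarith [mul_le_mul_of_nonneg_left h hK.le]
  have h2 : 200 ≤ K * R * t := by nlinarith [mul_pos hK hR]
  nlinarith [mul_le_mul_of_nonneg_right h1 (sq_nonneg t),
    mul_le_mul_of_nonneg_right h2 (sq_nonneg t)]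

theorem le_mul_fluxForm_sq_of_far {M N K R ρ φ Q t : ℝ} (ht : 0 < t) (hK : 0 < K) (hR : 0 < R)
    (hMN : 0 ≤ M * N) (hQ : K * R * t ^ 3 / 8 ≤ Q) (h : φ * ρ ≤ M * N * R ^ 2 * t) :
    φ * (K ^ 2 * ρ * t ^ 5) ≤ 64 * M * N * Q ^ 2 := by
  have h1 : (K * R * t ^ 3 / 8) ^ 2 ≤ Q ^ 2 := pow_le_pow_left₀ (by positivity) hQ 2
  calc φ * (K ^ 2 * ρ * t ^ 5) = φ * ρ * (K ^ 2 * t ^ 5) := by ring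
    _ ≤ M * N * R ^ 2 * t * (K ^ 2 * t ^ 5) := mul_le_mul_of_nonneg_right h (by positivity)
    _ = 64 * (M * N) * (K * R * t ^ 3 / 8) ^ 2 := by ring
    _ ≤ 64 * (M * N) * Q ^ 2 := mul_le_mul_of_nonneg_left h1 (by linarith)
    _ = _ := by ring

theorem fluxForm_ge_of_near {D K R c δ T x t : ℝ} (hD : 100 ≤ D) (hK : 0 < K) (hR : 0 < R)
    (hR1 : R ≤ 1) (hKR : 4 / 3 ≤ K * R ^ 2) (hc : -1 ≤ c) (hcx : c ≤ x) (hx : x ∈ Set.Ioo (-1 : ℝ) 1)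
    (hT : T = K * (R ^ 2 - (x - c) ^ 2)) (h1 : 0 ≤ T + x ^ 2)
    (h2 : 0 < x → 6 * x * (1 - x ^ 2) * (K * (x - c)) ≤ (T + 4) * (T + x ^ 2))
    (h3 : 24 / 25 ≤ x → 1 - x ≤ x - c → 3 / 10 ≤ T + x ^ 2)
    (hδ : K * R * δ = D) (htδ : 49 / 50 * δ ≤ t) (ht : t ≤ 2 * δ) :
    t ^ 2 / (1000 * D ^ 2) ≤ fluxForm T x t := by
  have hφ := one_sub_sq_pos hx
  have hKR0 := mul_pos hK hR
  have hδ0 : 0 < δ := by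
    by_contra! h
    nlinarith
  have ht0 : 0 < t := by linarith
  have hsmall : t ^ 2 / (1000 * D ^ 2) ≤ t ^ 2 / 10000 := by
    gcongr
    nlinarith
  have ht2 : 0 < t ^ 2 := by positivity
  rcases le_or_gt 1 T with hT1 | hT1
  · refine hsmall.trans (le_trans ?_ (fluxForm_ge T x t (by linarith)))
    nlinarith
  have hX : R / 2 ≤ x - c := by
    by_contra! h
    have : (x - c) ^ 2 ≤ (R / 2) ^ 2 := pow_le_pow_left₀ (by linarith) h.le 2
    nlinarith [mul_le_mul_of_nonneg_left this hK.le]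
  have hKRt : 98 ≤ K * R * t := by nlinarith
  have hKRt' : K * R * t ≤ 2 * D := by nlinarith
  have hlow : 9 / 20 * ((T + x ^ 2) * t ^ 2) + 3 / 4 * (1 - x ^ 2) ^ 2 ≤ fluxForm T x t := by
    rw [fluxForm]
    rcases le_or_gt x 0 with hx0 | hx0
    · nlinarith [mul_nonneg h1 ht2.le, mul_nonneg (mul_nonneg (neg_nonneg.2 hx0) hφ.le) ht0.le]
    · have hz : 0 < x * (1 - x ^ 2) := mul_pos hx0 hφ
      have a1 : 3 / 5 * (x * (1 - x ^ 2)) * (K * R) ≤ T + x ^ 2 := by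
        have e1 : (T + 4) * (T + x ^ 2) ≤ 5 * (T + x ^ 2) :=
          mul_le_mul_of_nonneg_right (by linarith) h1
        have e2 : K * (R / 2) ≤ K * (x - c) := mul_le_mul_of_nonneg_left hX hK.le
        nlinarith [mul_le_mul_of_nonneg_left e2 hz.le, h2 hx0]
      have a2 : 58 * (x * (1 - x ^ 2)) * t ≤ (T + x ^ 2) * t ^ 2 := by
        nlinarith [mul_le_mul_of_nonneg_right a1 ht2.le,
          mul_le_mul_of_nonneg_left hKRt (mul_pos hz ht0).le]
      nlinarith [mul_pos hz ht0]
  refine le_trans ?_ hlow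
  rcases le_or_gt (1 / 10) ((1 - x ^ 2) * (K * R)) with hb | hb
  · have a1 : t / (20 * D) ≤ 1 - x ^ 2 := by
      rw [div_le_iff₀ (by linarith)]
      nlinarith [mul_le_mul_of_nonneg_right hb ht0.le, mul_le_mul_of_nonneg_left hKRt' hφ.le]
    have a2 := pow_le_pow_left₀ (by positivity) a1 2
    have a3 : t ^ 2 / (1000 * D ^ 2) ≤ 3 / 4 * (t / (20 * D)) ^ 2 := by
      rw [div_pow, mul_pow, div_le_iff₀ (by positivity)]
      field_simp
      norm_num
    nlinarith [mul_nonneg h1 ht2.le]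
  · obtain ⟨hx1, hx2⟩ := near_one_of_one_sub_sq_small hR hR1 hK hKR hc hX hx.2.le hb
    have hT3 := mul_le_mul_of_nonneg_right (h3 hx1 hx2) ht2.le
    linarith [sq_nonneg (1 - x ^ 2)]

/-- The estimate for the quadratic form when the right turning point is close to the right or left
endpoint. -/
theorem fluxForm_bound_of_small {D N K R b c δ T x t : ℝ} (hD : 100 ≤ D) (hK : 0 < K) (hR : 0 < R)
    (hR1 : R ≤ 1) (hKR : 4 / 3 ≤ K * R ^ 2) (hNR : 1 ≤ N * R) (hc : -1 ≤ c) (hb : b = c + R)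
    (hb1 : b ≤ 1) (hcx : c ≤ x) (hx : x ∈ Set.Ioo (-1 : ℝ) 1)
    (hT : T = K * (R ^ 2 - (x - c) ^ 2)) (h1 : 0 ≤ T + x ^ 2)
    (h2 : 0 < x → 6 * x * (1 - x ^ 2) * (K * (x - c)) ≤ (T + 4) * (T + x ^ 2))
    (h3 : 24 / 25 ≤ x → 1 - x ≤ x - c → 3 / 10 ≤ T + x ^ 2)
    (hδ : K * R * δ = D) (hφb : 1 - b ^ 2 ≤ δ) (ht : t = b + δ - x) (htδ : 49 / 50 * δ ≤ t) :
    0 < fluxForm T x t ∧ (1 - x ^ 2) * (K ^ 2 * (R + δ) * t ^ 5) ≤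
      (12000000 * D ^ 7) * N * fluxForm T x t ^ 2 := by
  have hφ := one_sub_sq_pos hx
  have hKR0 := mul_pos hK hR
  have hδ0 : 0 < δ := by
    by_contra! h
    nlinarith
  have ht0 : 0 < t := by linarith
  have hN : 0 < N := by
    by_contra! h
    nlinarith
  have hδR : δ ≤ D * R := by
    have : K * R * δ ≤ K * R * (D * R) := by nlinarith
    exact le_of_mul_le_mul_left this hKR0
  have hρ : R + δ ≤ 2 * D * R := by nlinarith
  rcases le_or_gt (2 * δ) t with hfar | hnear
  · have hQ := fluxForm_ge_of_far (T := T) (x := x) hK hR hδ0 (by linarith)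
      (by rw [hT, ht, hb]; ring) hfar (by linarith) (by linarith)
    refine ⟨lt_of_lt_of_le (by positivity) hQ, ?_⟩
    have hφt : 1 - x ^ 2 ≤ 2 * t := by
      have := one_sub_sq_le ⟨by linarith, hb1⟩ (Set.Ioo_subset_Icc_self hx)
      rw [abs_of_nonneg (by linarith)] at this
      linarith
    refine (le_mul_fluxForm_sq_of_far (M := 4 * D) (N := N) ht0 hK hR (by positivity) hQ ?_).trans ?_
    · calc (1 - x ^ 2) * (R + δ) ≤ 2 * t * (2 * D * R) := by gcongr
        _ = 4 * D * R * t * 1 := by ring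
        _ ≤ 4 * D * R * t * (N * R) := mul_le_mul_of_nonneg_left hNR (by positivity)
        _ = _ := by ring
    · have : D ≤ D ^ 7 := le_self_pow₀ (by linarith) (by norm_num)
      rw [mul_assoc, mul_assoc _ N]
      exact mul_le_mul_of_nonneg_right (by linarith) (by positivity)
  · have hQ := fluxForm_ge_of_near hD hK hR hR1 hKR hc hcx hx hT h1 h2 h3 hδ htδ hnear.le
    have hpos : 0 < t ^ 2 / (1000 * D ^ 2) := by positivity
    refine ⟨hpos.trans_le hQ, ?_⟩
    have hQ2 := pow_le_pow_left₀ hpos.le hQ 2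
    have hφδ : 1 - x ^ 2 ≤ 3 * δ := by
      have h := one_sub_sq_le ⟨by linarith, hb1⟩ (Set.Ioo_subset_Icc_self hx)
      have : |b - x| ≤ δ := abs_le.2 ⟨by linarith, by linarith⟩
      linarith
    have hDR : D ^ 2 / R ≤ D ^ 2 * N := by
      rw [div_le_iff₀ hR]
      nlinarith [sq_nonneg D]
    calc (1 - x ^ 2) * (K ^ 2 * (R + δ) * t ^ 5)
        ≤ 3 * δ * (K ^ 2 * (2 * D * R) * ((2 * δ) * t ^ 4)) := by
          gcongr
          rw [pow_succ, mul_comm]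
          gcongr
      _ = 12 * D * ((K * R * δ) ^ 2 / R) * t ^ 4 := by
          field_simp
          ring
      _ ≤ 12 * D * (D ^ 2 * N) * t ^ 4 := by
          rw [hδ]
          gcongr
      _ = (12000000 * D ^ 7) * N * (t ^ 2 / (1000 * D ^ 2)) ^ 2 := by
          field_simp
          ring
      _ ≤ _ := by gcongr

/-- The estimate for the quadratic form when the right turning point is far from the endpoints. -/
theorem fluxForm_bound_of_large {N K R b c δ T x t : ℝ} (hN : 2 ≤ N) (hKN : K = N ^ 2 - 1)
    (hR : 0 < R) (hNR : 1 ≤ N * R) (hb : b = c + R) (hb1 : b ∈ Set.Icc (-1 : ℝ) 1)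
    (hbR : 1 - b ^ 2 ≤ 2 * (N + 1) * R ^ 2) (hcx : c ≤ x) (hx : x ∈ Set.Ioo (-1 : ℝ) 1)
    (hT : T = K * (R ^ 2 - (x - c) ^ 2)) (h1 : 0 ≤ T + x ^ 2) (hδ0 : 0 < δ)
    (hδ : K * R * δ ^ 3 = 1000 * (1 - b ^ 2) ^ 2) (hφb : 100 * δ ≤ 1 - b ^ 2)
    (h100 : 100 ≤ K * R * δ) (ht : t = b + δ - x) (htδ : 49 / 50 * δ ≤ t) :
    0 < fluxForm T x t ∧ (1 - x ^ 2) * (K ^ 2 * (R + δ) * t ^ 5) ≤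
      10 ^ 10 * N * fluxForm T x t ^ 2 := by
  have hφ := one_sub_sq_pos hx
  have hK : 0 < K := by nlinarith
  have ht0 : 0 < t := by linarith
  set φb := 1 - b ^ 2 with hφbdef
  have hφb0 : 0 < φb := by linarith
  have hK2 : K * φb ≤ 4 * N ^ 3 * R ^ 2 := by
    have h1 : K * φb ≤ K * (2 * (N + 1) * R ^ 2) := mul_le_mul_of_nonneg_left hbR hK.le
    have h2 : K * (N + 1) ≤ 2 * N ^ 3 := by rw [hKN]; nlinarith [sq_nonneg (N - 1)]
    nlinarith [mul_le_mul_of_nonneg_right h2 (sq_nonneg R)]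
  have hρ : R + δ ≤ 24 * R := by
    have h2 : φb ^ 2 ≤ (2 * (N + 1) * R ^ 2) ^ 2 := pow_le_pow_left₀ hφb0.le hbR 2
    have h3 : (N + 1) ^ 2 ≤ 3 * K := by rw [hKN]; nlinarith
    have h4 : K * R * δ ^ 3 ≤ K * R * (23 * R) ^ 3 := by
      rw [hδ]
      have : (N + 1) ^ 2 * R ^ 4 ≤ 3 * K * R ^ 4 := mul_le_mul_of_nonneg_right h3 (by positivity)
      have : 0 < K * R ^ 4 := by positivity
      linarith
    have h5 := le_of_mul_le_mul_left h4 (mul_pos hK hR)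
    have := le_of_pow_le_pow_left₀ (by norm_num) (by positivity) h5
    linarith
  rcases le_or_gt (2 * δ) t with hfar | hnear
  · have hQ := fluxForm_ge_of_far (T := T) (x := x) hK hR hδ0 (by linarith)
      (by rw [hT, ht, hb]; ring) hfar (by linarith) h100
    refine ⟨lt_of_lt_of_le (by positivity) hQ, ?_⟩
    have hφt : 1 - x ^ 2 ≤ φb + 2 * t := by
      have := one_sub_sq_le hb1 (Set.Ioo_subset_Icc_self hx)
      rw [abs_of_nonneg (by linarith)] at this
      linarith
    have hφb2 : φb ≤ N * R * δ := by
      refine le_of_pow_le_pow_left₀ (n := 3) (by norm_num) (by positivity) ?_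
      refine le_of_mul_le_mul_left ?_ hK
      calc K * φb ^ 3 = K * φb * φb ^ 2 := by ring
        _ ≤ 4 * N ^ 3 * R ^ 2 * φb ^ 2 := by gcongr
        _ ≤ N ^ 3 * R ^ 2 * (1000 * φb ^ 2) := by
          have : 0 ≤ N ^ 3 * R ^ 2 * φb ^ 2 := by positivity
          linarith
        _ = _ := by rw [← hδ]; ring
    have hφt2 : 1 - x ^ 2 ≤ 3 * N * R * t := by
      have h1 : N * R * δ ≤ N * R * t := by gcongr; linarith
      have h2 : 1 * t ≤ N * R * t := mul_le_mul_of_nonneg_right hNR ht0.le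
      linarith
    refine (le_mul_fluxForm_sq_of_far (M := 72) (N := N) ht0 hK hR (by positivity) hQ ?_).trans ?_
    · calc (1 - x ^ 2) * (R + δ) ≤ 3 * N * R * t * (24 * R) :=
            mul_le_mul hφt2 hρ (by linarith) (by positivity)
        _ = _ := by ring
    · have : 0 ≤ N * fluxForm T x t ^ 2 := by positivity
      linarith
  · have hφx : 98 / 100 * φb ≤ 1 - x ^ 2 := by
      have h := one_sub_sq_le (Set.Ioo_subset_Icc_self hx) hb1
      have : |x - b| ≤ δ := abs_le.2 ⟨by linarith, by linarith⟩
      linarith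
    have hφt : 49 * t ≤ 1 - x ^ 2 := by linarith
    have hQ : (1 - x ^ 2) ^ 2 / 2 ≤ fluxForm T x t := by
      have e : fluxForm T x t = (T + x ^ 2) * t ^ 2 / 2 + (1 - x ^ 2) *
        (3 / 4 * (1 - x ^ 2) - 3 / 2 * x * t) := by rw [fluxForm]; ring
      have : x * t ≤ t := by nlinarith [hx.2]
      have : (1 - x ^ 2) * (1 / 2 * (1 - x ^ 2)) ≤ (1 - x ^ 2) *
        (3 / 4 * (1 - x ^ 2) - 3 / 2 * x * t) := mul_le_mul_of_nonneg_left (by linarith) hφ.le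
      have : 0 ≤ (T + x ^ 2) * t ^ 2 / 2 := by positivity
      rw [e]
      linarith
    refine ⟨lt_of_lt_of_le (by positivity) hQ, ?_⟩
    have hQ2 := pow_le_pow_left₀ (by positivity) hQ 2
    have hKδ : K * δ ^ 2 ≤ 160 * N * φb := by
      refine le_of_pow_le_pow_left₀ (n := 3) (by norm_num) (by positivity) ?_
      refine le_of_mul_le_mul_left ?_ (pow_pos hR 2)
      calc R ^ 2 * (K * δ ^ 2) ^ 3 = K * (K * R * δ ^ 3) ^ 2 := by ring
        _ = 10 ^ 6 * φb ^ 3 * (K * φb) := by rw [hδ]; ring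
        _ ≤ 10 ^ 6 * φb ^ 3 * (4 * N ^ 3 * R ^ 2) := by gcongr
        _ ≤ _ := by
          have : 0 ≤ φb ^ 3 * N ^ 3 * R ^ 2 := by positivity
          linarith
    have hφ3 : φb ^ 3 ≤ 2 * (1 - x ^ 2) ^ 3 := by
      have := pow_le_pow_left₀ (by positivity) hφx 3
      have : 0 < φb ^ 3 := by positivity
      linarith
    calc (1 - x ^ 2) * (K ^ 2 * (R + δ) * t ^ 5)
        ≤ (1 - x ^ 2) * (K ^ 2 * (24 * R) * (2 * δ) ^ 5) := by gcongr
      _ = 768 * (1 - x ^ 2) * ((K * δ ^ 2) * (K * R * δ ^ 3)) := by ring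
      _ ≤ 768 * (1 - x ^ 2) * ((160 * N * φb) * (1000 * φb ^ 2)) := by
          rw [hδ]
          gcongr
      _ = 122880000 * (1 - x ^ 2) * N * φb ^ 3 := by ring
      _ ≤ 122880000 * (1 - x ^ 2) * N * (2 * (1 - x ^ 2) ^ 3) := by gcongr
      _ ≤ 10 ^ 10 * N * ((1 - x ^ 2) ^ 2 / 2) ^ 2 := by
          have : 0 ≤ N * (1 - x ^ 2) ^ 4 := by positivity
          linarith
      _ ≤ _ := by gcongr

theorem mul_sq_le_of_fluxForm {C N K ρ φ Q t Z I : ℝ} (ht : 0 < t) (hρ : 0 < ρ)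
    (hφ : 0 ≤ φ) (hZ : 0 ≤ Z) (hQ : 0 < Q) (hflux : Z * (Q / √t ^ 5) ≤ K * √ρ * I)
    (hbound : φ * (K ^ 2 * ρ * t ^ 5) ≤ C * N * Q ^ 2) : φ * Z ^ 2 ≤ C * N * I ^ 2 := by
  have hr : 0 < √t := Real.sqrt_pos.2 ht
  have h1 : Z * Q ≤ K * √ρ * I * √t ^ 5 := by
    rwa [← mul_div_assoc, div_le_iff₀ (pow_pos hr 5)] at hflux
  have h2 := pow_le_pow_left₀ (mul_nonneg hZ hQ.le) h1 2
  have h3 : (K * √ρ * I * √t ^ 5) ^ 2 = K ^ 2 * ρ * t ^ 5 * I ^ 2 := by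
    have e1 : √ρ ^ 2 = ρ := Real.sq_sqrt hρ.le
    have e2 : √t ^ 2 = t := Real.sq_sqrt ht.le
    calc _ = K ^ 2 * √ρ ^ 2 * (√t ^ 2) ^ 5 * I ^ 2 := by ring
      _ = _ := by rw [e1, e2]
  refine le_of_mul_le_mul_right ?_ (pow_pos hQ 2)
  calc φ * Z ^ 2 * Q ^ 2 = φ * (Z * Q) ^ 2 := by ring
    _ ≤ φ * (K ^ 2 * ρ * t ^ 5 * I ^ 2) := mul_le_mul_of_nonneg_left (h2.trans_eq h3) hφ
    _ = φ * (K ^ 2 * ρ * t ^ 5) * I ^ 2 := by ring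
    _ ≤ C * N * Q ^ 2 * I ^ 2 := mul_le_mul_of_nonneg_right hbound (sq_nonneg I)
    _ = _ := by ring

theorem exists_cubic_scale {K R φb D : ℝ} (hKR : 0 < K * R) (hD : 10 ^ 9 ≤ D)
    (hφb : 0 < φb) (h : D ≤ K * R * φb) :
    ∃ δ : ℝ, 0 < δ ∧ K * R * δ ^ 3 = 1000 * φb ^ 2 ∧ 100 * δ ≤ φb ∧ 100 ≤ K * R * δ := by
  have hq : 0 < 1000 * φb ^ 2 / (K * R) := by positivity
  refine ⟨(1000 * φb ^ 2 / (K * R)) ^ ((3 : ℕ) : ℝ)⁻¹, Real.rpow_pos_of_pos hq _, ?_⟩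
  have h3 := Real.rpow_inv_natCast_pow hq.le (n := 3) (by norm_num)
  have hδ := Real.rpow_pos_of_pos hq ((3 : ℕ) : ℝ)⁻¹
  generalize (1000 * φb ^ 2 / (K * R)) ^ ((3 : ℕ) : ℝ)⁻¹ = δ at h3 hδ
  have e : K * R * δ ^ 3 = 1000 * φb ^ 2 := by
    rw [h3, mul_div_cancel₀ _ hKR.ne']
  refine ⟨e, ?_, ?_⟩
  · refine le_of_pow_le_pow_left₀ (n := 3) (by norm_num) hφb.le ?_
    refine le_of_mul_le_mul_left ?_ hKR
    have : 10 ^ 9 * φb ^ 2 ≤ K * R * φb * φb ^ 2 :=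
      mul_le_mul_of_nonneg_right (hD.trans h) (sq_nonneg _)
    calc K * R * (100 * δ) ^ 3 = 10 ^ 6 * (K * R * δ ^ 3) := by ring
      _ = 10 ^ 9 * φb ^ 2 := by rw [e]; ring
      _ ≤ _ := this
      _ = _ := by ring
  · refine le_of_pow_le_pow_left₀ (n := 3) (by norm_num) (by positivity) ?_
    have h1 : (10 ^ 9 : ℝ) ^ 2 ≤ (K * R * φb) ^ 2 :=
      pow_le_pow_left₀ (by norm_num) (hD.trans h) 2
    calc (100 : ℝ) ^ 3 ≤ 1000 * (K * R * φb) ^ 2 := by linarith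
      _ = (K * R) ^ 2 * (K * R * δ ^ 3) := by rw [e]; ring
      _ = _ := by ring

theorem sub_ge_of_potential_ge {K R c b δ x t T : ℝ} (hK : 0 < K) (hR : 0 < R) (hδ : 0 < δ)
    (hb : b = c + R) (hT : T = K * (R ^ 2 - (x - c) ^ 2)) (h1 : -1 ≤ T)
    (h100 : 100 ≤ K * R * δ) (ht : t = b + δ - x) : 49 / 50 * δ ≤ t := by
  by_contra! h
  have e : T = -(K * ((δ - t) * (2 * R + δ - t))) := by rw [hT, ht, hb]; ring
  have h2 : 1 / 50 * δ * (2 * R) ≤ (δ - t) * (2 * R + δ - t) :=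
    mul_le_mul (by linarith) (by linarith) (by linarith) (by linarith)
  have h3 := mul_le_mul_of_nonneg_left h2 hK.le
  have h4 : K * (1 / 50 * δ * (2 * R)) = 1 / 25 * (K * R * δ) := by ring
  linarith

namespace IsJacobiSolution

variable {α β ev : ℝ} {y y₁ y₂ : ℝ → ℝ}

theorem weight_mul_sq_le_of_critical (H : IsJacobiSolution α β ev y y₁ y₂) (hα : 0 ≤ α)
    (hβ : 0 ≤ β) {N K c R x₀ : ℝ} (hK : K = 4 * ev + (α + β) * (α + β + 2))
    (hc : K * c = β ^ 2 - α ^ 2)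
    (hT : ∀ x, jacobiPotential α β ev x = K * (R ^ 2 - (x - c) ^ 2)) (hN : 2 ≤ N)
    (hKN : K = N ^ 2 - 1) (hR : 0 < R) (hR1 : R ≤ 1) (hKR : 4 / 3 ≤ K * R ^ 2)
    (hNR : 1 ≤ N * R) (hc1 : -1 ≤ c) (hb1 : c + R ≤ 1)
    (hbR : 1 - (c + R) ^ 2 ≤ 2 * (N + 1) * R ^ 2)
    (hx₀ : x₀ ∈ Set.Ioo (-1 : ℝ) 1) (hcx : c ≤ x₀) (hy : y x₀ ≠ 0)
    (hcrit : 2 * (1 - x₀ ^ 2) * y₁ x₀ = (x₀ - (β - α - (α + β) * x₀)) * y x₀) :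
    (1 - x₀ ^ 2) * (jacobiWeight α β x₀ * y x₀ ^ 2) ^ 2 ≤
      12000000 * (10 ^ 9) ^ 7 * N * (∫ x in (-1 : ℝ)..1, jacobiWeight α β x * y x ^ 2) ^ 2 := by
  have hK0 : 0 < K := by nlinarith
  have hKR0 := mul_pos hK0 hR
  have hb : c + R ∈ Set.Icc (-1 : ℝ) 1 := ⟨by linarith, hb1⟩
  have h1 : 0 ≤ K * (R ^ 2 - (x₀ - c) ^ 2) + x₀ ^ 2 := by
    simpa using H.potential_of_critical_linear hα hβ hK hc hT hK0 hx₀ hcx hy hcrit le_rfl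
      (by simpa using mul_nonneg hK0.le (sub_nonneg.2 hcx))
  have hφ := one_sub_sq_pos hx₀
  have hT4 : 0 < K * (R ^ 2 - (x₀ - c) ^ 2) + 4 := by linarith
  have h2 : 6 * x₀ * (1 - x₀ ^ 2) * (K * (x₀ - c)) ≤
      (K * (R ^ 2 - (x₀ - c) ^ 2) + 4) * (K * (R ^ 2 - (x₀ - c) ^ 2) + x₀ ^ 2) := by
    have := H.potential_of_critical_linear hα hβ hK hc hT hK0 hx₀ hcx hy hcrit
      (κ := K * (x₀ - c) / (K * (R ^ 2 - (x₀ - c) ^ 2) + 4))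
      (div_nonneg (mul_nonneg hK0.le (sub_nonneg.2 hcx)) hT4.le) (div_mul_cancel₀ _ hT4.ne').le
    rwa [← mul_div_assoc, div_le_iff₀' hT4] at this
  have h3 : 24 / 25 ≤ x₀ → 1 - x₀ ≤ x₀ - c →
      3 / 10 ≤ K * (R ^ 2 - (x₀ - c) ^ 2) + x₀ ^ 2 := fun hx hs => by
    rcases le_or_gt α (1 / 4) with h | h
    · have hT1 := hT 1
      rw [jacobiPotential] at hT1
      have hα2 : α ^ 2 ≤ (1 / 4) ^ 2 := pow_le_pow_left₀ hα h 2
      have hx2 : (24 / 25) ^ 2 ≤ x₀ ^ 2 := pow_le_pow_left₀ (by norm_num) hx 2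
      have h4 : K * (x₀ - c) ^ 2 ≤ K * (1 - c) ^ 2 :=
        mul_le_mul_of_nonneg_left (pow_le_pow_left₀ (by linarith) (by linarith [hx₀.2]) 2) hK0.le
      linarith
    · exact H.potential_of_critical_near_one h hβ hK hc hT hK0 ⟨hx, hx₀.2⟩ hs hy hcrit
  have hw := jacobiWeight_pos α β hx₀
  have hflux : ∀ δ : ℝ, 0 < δ → 100 ≤ K * R * δ → 16 * (1 - (c + R) ^ 2) ^ 2 ≤ K * R * δ ^ 3 →
      49 / 50 * δ ≤ c + R + δ - x₀ → jacobiWeight α β x₀ * y x₀ ^ 2 *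
        (fluxForm (K * (R ^ 2 - (x₀ - c) ^ 2)) x₀ (c + R + δ - x₀) / √(c + R + δ - x₀) ^ 5) ≤
        K * √(R + δ) * ∫ x in (-1 : ℝ)..1, jacobiWeight α β x * y x ^ 2 :=
    fun δ hδ h100 h16 htδ => by
    have key := H.weight_mul_flux_le hα hβ hK hc hT hK0 hR hb hx₀ hδ rfl htδ h100 h16
    rw [jacobiFlux_of_critical _ _ _ hcrit, hT] at key
    refine le_of_eq_of_le ?_ key
    have ht : 0 < c + R + δ - x₀ := by linarith
    have hr : 0 < √(c + R + δ - x₀) := Real.sqrt_pos.2 ht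
    have hrt : √(c + R + δ - x₀) ^ 2 = c + R + δ - x₀ := Real.sq_sqrt ht.le
    generalize √(c + R + δ - x₀) = r at hr hrt
    rw [fluxForm, ← hrt]
    field_simp
    ring
  have hZ : 0 ≤ jacobiWeight α β x₀ * y x₀ ^ 2 := by positivity
  have h1' : -1 ≤ K * (R ^ 2 - (x₀ - c) ^ 2) := by linarith
  have hφb0 : 0 ≤ 1 - (c + R) ^ 2 := by nlinarith [hb.1, hb.2]
  rcases le_or_gt (K * R * (1 - (c + R) ^ 2)) (10 ^ 9) with hs | hs
  · have hδ : K * R * (10 ^ 9 / (K * R)) = 10 ^ 9 := mul_div_cancel₀ _ hKR0.ne'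
    have hδ0 : 0 < 10 ^ 9 / (K * R) := by positivity
    have hφb : 1 - (c + R) ^ 2 ≤ 10 ^ 9 / (K * R) := by rwa [le_div_iff₀' hKR0]
    generalize 10 ^ 9 / (K * R) = δ at hδ hδ0 hφb
    have htδ := sub_ge_of_potential_ge hK0 hR hδ0 rfl rfl h1' (by linarith) rfl
    obtain ⟨hQ, hbound⟩ := fluxForm_bound_of_small (by norm_num) hK0 hR hR1 hKR hNR hc1 rfl hb1 hcx
      hx₀ rfl h1 (fun _ => h2) h3 hδ hφb rfl htδ
    refine mul_sq_le_of_fluxForm (by linarith) (by linarith) hφ.le hZ hQ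
      (hflux δ hδ0 (by linarith) ?_ htδ) hbound
    have := pow_le_pow_left₀ hφb0 hφb 2
    have e : K * R * δ ^ 3 = K * R * δ * δ ^ 2 := by ring
    rw [e, hδ]
    linarith [sq_nonneg δ]
  · obtain ⟨δ, hδ0, hδ, hφb, h100⟩ := exists_cubic_scale hKR0 le_rfl
      (pos_of_mul_pos_right (lt_trans (by norm_num) hs) hKR0.le) hs.le
    have htδ := sub_ge_of_potential_ge hK0 hR hδ0 rfl rfl h1' h100 rfl
    obtain ⟨hQ, hbound⟩ := fluxForm_bound_of_large hN hKN hR hNR rfl hb hbR hcx hx₀ rfl h1 hδ0 hδ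
      hφb h100 rfl htδ
    refine mul_sq_le_of_fluxForm (by linarith) (by linarith) hφ.le hZ hQ
      (hflux δ hδ0 h100 ?_ htδ) (hbound.trans ?_)
    · rw [hδ]
      linarith [sq_nonneg (1 - (c + R) ^ 2)]
    · rw [mul_assoc, mul_assoc _ N]
      exact mul_le_mul_of_nonneg_right (by norm_num) (by positivity)

end IsJacobiSolution

theorem mul_one_sub_center_sq_le {α β K c : ℝ} (hα : 0 ≤ α) (hβ : 0 ≤ β) (hK : 0 < K)
    (hc : K * c = β ^ 2 - α ^ 2) :
    K * (1 - c ^ 2) ≤ 2 * (K - (α - β) ^ 2) := by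
  rcases le_total α β with h | h
  · have h1 : 0 ≤ K * ((1 - c) * (1 - c)) := mul_nonneg hK.le (mul_self_nonneg _)
    linarith [mul_nonneg hα (sub_nonneg.2 h)]
  · have h1 : 0 ≤ K * ((1 + c) * (1 + c)) := mul_nonneg hK.le (mul_self_nonneg _)
    linarith [mul_nonneg hβ (sub_nonneg.2 h)]

theorem exists_center_radius {α β m ev : ℝ} {n : ℕ} (hα : 0 ≤ α) (hβ : 0 ≤ β)
    (hm : m = 2 * n + α + β) (hm1 : 1 ≤ m) (hev : ev = n * (n + α + β + 1)) :
    ∃ c R : ℝ, m * (m + 2) * c = β ^ 2 - α ^ 2 ∧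
      (∀ x, jacobiPotential α β ev x = m * (m + 2) * (R ^ 2 - (x - c) ^ 2)) ∧
      0 < R ∧ R ≤ 1 ∧ 4 / 3 ≤ m * (m + 2) * R ^ 2 ∧ 1 ≤ (m + 1) * R ∧ -1 ≤ c ∧ c + R ≤ 1 ∧
      1 - (c + R) ^ 2 ≤ 2 * (m + 1 + 1) * R ^ 2 := by
  have hn : (0 : ℝ) ≤ n := n.cast_nonneg
  obtain ⟨K, hK⟩ : ∃ K, K = m * (m + 2) := ⟨_, rfl⟩
  have hK0 : 0 < K := by rw [hK]; exact mul_pos (by linarith) (by linarith)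
  have hKev : K = 4 * ev + (α + β) * (α + β + 2) := by rw [hK, hm, hev]; ring
  set F₁ := K - (α + β) ^ 2 with hF₁
  set F₂ := K - (α - β) ^ 2 with hF₂
  have hF₁m : 2 * m ≤ F₁ := by
    have : 0 ≤ n * (n + α + β) := by positivity
    rw [hF₁, hKev, hev, hm]
    linarith
  have hF₁₂ : F₁ ≤ F₂ := by nlinarith [mul_nonneg hα hβ]
  have hFF : 0 < F₁ * F₂ := mul_pos (by linarith) (by linarith)
  obtain ⟨c, hc⟩ : ∃ c, c = (β ^ 2 - α ^ 2) / K := ⟨_, rfl⟩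
  obtain ⟨R, hR⟩ : ∃ R, R = √(F₁ * F₂) / K := ⟨_, rfl⟩
  have hKc : K * c = β ^ 2 - α ^ 2 := by rw [hc, mul_div_cancel₀ _ hK0.ne']
  have hR0 : 0 < R := by rw [hR]; exact div_pos (Real.sqrt_pos.2 hFF) hK0
  have hKR2 : (K * R) ^ 2 = F₁ * F₂ := by rw [hR, mul_div_cancel₀ _ hK0.ne', Real.sq_sqrt hFF.le]
  have hKR : 2 * m ≤ K * R := by
    refine le_of_pow_le_pow_left₀ (n := 2) two_ne_zero (by positivity) ?_
    rw [hKR2, sq]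
    exact mul_le_mul hF₁m (hF₁m.trans hF₁₂) (by linarith) (by linarith)
  have hNR : 2 ≤ (m + 2) * R := by
    rw [hK] at hKR
    refine le_of_mul_le_mul_left ?_ (show 0 < m by linarith)
    linarith
  have hT : ∀ x, jacobiPotential α β ev x = K * (R ^ 2 - (x - c) ^ 2) := fun x => by
    refine mul_left_cancel₀ hK0.ne' ?_
    rw [jacobiPotential, ← hKev]
    have e : K * (K * (R ^ 2 - (x - c) ^ 2)) = (K * R) ^ 2 - (K * x - K * c) ^ 2 := by ring
    rw [e, hKR2, hKc, hF₁, hF₂]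
    ring
  have hs : (α + β) ^ 2 ≤ K := by linarith
  have hc1 : -1 ≤ c := by
    rw [hc, le_div_iff₀ hK0]
    nlinarith [mul_nonneg hα hβ]
  have hc2 : c ≤ 1 := by
    rw [hc, div_le_iff₀ hK0]
    nlinarith [mul_nonneg hα hβ]
  have hb1 : R ≤ 1 - c := by
    have h := hT 1
    rw [jacobiPotential] at h
    refine le_of_pow_le_pow_left₀ (n := 2) two_ne_zero (by linarith) ?_
    refine le_of_mul_le_mul_left ?_ hK0
    nlinarith [sq_nonneg α]
  have hb2 : R ≤ 1 + c := by
    have h := hT (-1)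
    rw [jacobiPotential] at h
    refine le_of_pow_le_pow_left₀ (n := 2) two_ne_zero (by linarith) ?_
    refine le_of_mul_le_mul_left ?_ hK0
    nlinarith [sq_nonneg β]
  have hφc : 1 - c ^ 2 ≤ (m + 2) * R ^ 2 := by
    have h1 : K * (1 - c ^ 2) ≤ 2 * F₂ :=
      mul_one_sub_center_sq_le hα hβ hK0 hKc
    refine le_of_mul_le_mul_left ?_ (mul_pos (show 0 < m by linarith) hK0)
    calc m * K * (1 - c ^ 2) ≤ m * (2 * F₂) := by
          rw [mul_assoc]
          exact mul_le_mul_of_nonneg_left h1 (by linarith)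
      _ = 2 * m * F₂ := by ring
      _ ≤ F₁ * F₂ := mul_le_mul_of_nonneg_right hF₁m (by linarith)
      _ = (K * R) ^ 2 := hKR2.symm
      _ = K * K * R ^ 2 := by ring
      _ = m * K * ((m + 2) * R ^ 2) := by nth_rewrite 1 [hK]; ring
  have hKR2' : 2 * m * R ≤ K * R ^ 2 := by
    rw [sq, ← mul_assoc]
    exact mul_le_mul_of_nonneg_right hKR hR0.le
  have hRm : 2 * R ≤ (m + 2) * R ^ 2 := by
    rw [sq, ← mul_assoc]
    exact mul_le_mul_of_nonneg_right hNR hR0.le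
  have hmR : R ≤ m * R := le_mul_of_one_le_left hR0.le hm1
  have hcR : -(c * R) ≤ R := by linarith [mul_nonneg (neg_le_iff_add_nonneg'.1 hc1) hR0.le]
  refine ⟨c, R, hK ▸ hKc, hK ▸ hT, hR0, by linarith, ?_, by linarith, hc1, by linarith, ?_⟩
  · rw [← hK]
    linarith
  · linarith [sq_nonneg R]

theorem isJacobiSolution_jacobi (α β : ℝ) (n : ℕ) :
    ∃ y₂, IsJacobiSolution α β (n * (n + α + β + 1)) (jacobi α β n) (jacobiDeriv α β n) y₂ := by
  cases n with
  | zero =>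
    refine ⟨fun _ => 0, hasDerivAt_jacobi α β 0, fun x => ?_, fun x => ?_⟩
    · exact (hasDerivAt_const x (0 : ℝ)).congr_of_eventuallyEq
        (.of_forall fun z => by simp [jacobiDeriv])
    · simp [jacobiDeriv]
  | succ n =>
    refine ⟨fun x => (n + 2 + α + β) / 2 * jacobiDeriv (α + 1) (β + 1) n x,
      hasDerivAt_jacobi α β (n + 1), fun x => ?_, fun x => ?_⟩
    · exact (hasDerivAt_jacobi (α + 1) (β + 1) n x).const_mul _
    · have h := jacobi_raising α β n x
      have e : jacobiDeriv α β (n + 1) x = (n + 2 + α + β) / 2 * jacobi (α + 1) (β + 1) n x := rfl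
      rw [e]
      push_cast
      linear_combination (n + 2 + α + β) / 2 * h

theorem jacobi_sq_le_at_max {α β : ℝ} (hα : 0 ≤ α) (hβ : 0 ≤ β) {n : ℕ}
    (hm : 1 ≤ 2 * n + α + β) {x₀ : ℝ} (hx₀ : x₀ ∈ Set.Ioo (-1 : ℝ) 1)
    (hside : β ^ 2 - α ^ 2 ≤ (2 * n + α + β) * (2 * n + α + β + 2) * x₀)
    (hmax : ∀ x ∈ Set.Ioo (-1 : ℝ) 1,
      jacobiWeight (α + 1 / 2) (β + 1 / 2) x * jacobi α β n x ^ 2 ≤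
        jacobiWeight (α + 1 / 2) (β + 1 / 2) x₀ * jacobi α β n x₀ ^ 2) :
    (jacobiWeight (α + 1 / 2) (β + 1 / 2) x₀ * jacobi α β n x₀ ^ 2) ^ 2 ≤
      12000000 * (10 ^ 9) ^ 7 * (2 * n + α + β + 1) * jacobiNormSq α β n ^ 2 := by
  rcases eq_or_ne (jacobi α β n x₀) 0 with hy | hy
  · rw [hy]
    have : (0 : ℝ) ≤ n := n.cast_nonneg
    have : 0 ≤ 12000000 * (10 ^ 9) ^ 7 * (2 * n + α + β + 1) * jacobiNormSq α β n ^ 2 :=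
      mul_nonneg (mul_nonneg (by norm_num) (by linarith)) (sq_nonneg _)
    simpa using this
  obtain ⟨y₂, H⟩ := isJacobiSolution_jacobi α β n
  obtain ⟨c, R, hc, hT, hR, hR1, hKR, hNR, hc1, hb1, hbR⟩ :=
    exists_center_radius hα hβ rfl hm (ev := n * (n + α + β + 1)) rfl
  have hK0 : 0 < (2 * n + α + β) * (2 * n + α + β + 2) := by nlinarith
  have hcx : c ≤ x₀ := le_of_mul_le_mul_left (hc.trans_le hside) hK0
  have key := H.weight_mul_sq_le_of_critical hα hβ (N := 2 * n + α + β + 1) (by ring) hc hT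
    (by linarith) (by ring) hR hR1 hKR hNR hc1 hb1 hbR hx₀ hcx hy
    (H.critical_of_isMax hx₀ hmax hy)
  refine le_of_eq_of_le ?_ key
  have h1 : 0 < 1 - x₀ := sub_pos.2 hx₀.2
  have h2 : 0 < 1 + x₀ := by linarith [hx₀.1]
  have e1 : ((1 - x₀) ^ (1 / 2 : ℝ)) ^ 2 = 1 - x₀ := by rw [← Real.sqrt_eq_rpow, Real.sq_sqrt h1.le]
  have e2 : ((1 + x₀) ^ (1 / 2 : ℝ)) ^ 2 = 1 + x₀ := by rw [← Real.sqrt_eq_rpow, Real.sq_sqrt h2.le]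
  rw [jacobiWeight, jacobiWeight, Real.rpow_add h1, Real.rpow_add h2]
  calc _ = ((1 - x₀) ^ (1 / 2 : ℝ)) ^ 2 * ((1 + x₀) ^ (1 / 2 : ℝ)) ^ 2 *
        ((1 - x₀) ^ α * (1 + x₀) ^ β * jacobi α β n x₀ ^ 2) ^ 2 := by ring
    _ = _ := by rw [e1, e2]; ring

theorem jacobiWeight_neg (α β x : ℝ) : jacobiWeight β α (-x) = jacobiWeight α β x := by
  rw [jacobiWeight, jacobiWeight, sub_neg_eq_add, ← sub_eq_add_neg, mul_comm]

theorem jacobi_neg_sq (α β x : ℝ) (n : ℕ) : jacobi β α n (-x) ^ 2 = jacobi α β n x ^ 2 := by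
  rw [jacobi_neg, mul_pow, ← pow_mul, mul_comm n 2, pow_mul]
  simp

theorem jacobiNormSq_comm (α β : ℝ) (n : ℕ) : jacobiNormSq β α n = jacobiNormSq α β n := by
  have := intervalIntegral.integral_comp_neg (a := -1) (b := 1)
    fun x => jacobiWeight β α x * jacobi β α n x ^ 2
  rw [neg_neg] at this
  rw [jacobiNormSq, ← this, jacobiNormSq]
  simp only [jacobiWeight_neg, jacobi_neg_sq]

theorem jacobiWeight_mul_jacobi_sq_le {α β : ℝ} (hα : 0 ≤ α) (hβ : 0 ≤ β) {n : ℕ}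
    (hm : 1 ≤ 2 * n + α + β) {x : ℝ} (hx : x ∈ Set.Icc (-1 : ℝ) 1) :
    (jacobiWeight (α + 1 / 2) (β + 1 / 2) x * jacobi α β n x ^ 2) ^ 2 ≤
      12000000 * (10 ^ 9) ^ 7 * (2 * n + α + β + 1) * jacobiNormSq α β n ^ 2 := by
  set p : ℝ → ℝ := fun x => jacobiWeight (α + 1 / 2) (β + 1 / 2) x * jacobi α β n x ^ 2 with hp
  have hcont : Continuous p := (continuous_jacobiWeight (by linarith) (by linarith)).mul
    ((continuous_jacobi α β n).pow 2)
  obtain ⟨x₀, hx₀, hmax⟩ := isCompact_Icc.exists_isMaxOn ⟨x, hx⟩ hcont.continuousOn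
  have hmax' : ∀ z ∈ Set.Icc (-1 : ℝ) 1, p z ≤ p x₀ := fun z hz => hmax hz
  have hp0 : ∀ z ∈ Set.Icc (-1 : ℝ) 1, 0 ≤ p z := fun z hz =>
    mul_nonneg (jacobiWeight_nonneg _ _ hz) (sq_nonneg _)
  refine (pow_le_pow_left₀ (hp0 x hx) (hmax' x hx) 2).trans ?_
  have hrhs : 0 ≤ 12000000 * (10 ^ 9) ^ 7 * (2 * n + α + β + 1) * jacobiNormSq α β n ^ 2 :=
    mul_nonneg (mul_nonneg (by norm_num) (by linarith)) (sq_nonneg _)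
  have hvanish : p x₀ = 0 → p x₀ ^ 2 ≤
      12000000 * (10 ^ 9) ^ 7 * (2 * n + α + β + 1) * jacobiNormSq α β n ^ 2 := fun h => by
    rw [h]
    simpa using hrhs
  rcases hx₀.1.eq_or_lt with h | hl
  · exact hvanish (by
      rw [hp, ← h]
      simp [jacobiWeight, Real.zero_rpow (show β + 2⁻¹ ≠ 0 by positivity)])
  rcases hx₀.2.eq_or_lt with h | hr
  · exact hvanish (by
      rw [hp, h]
      simp [jacobiWeight, Real.zero_rpow (show α + 2⁻¹ ≠ 0 by positivity)])
  rcases le_total (β ^ 2 - α ^ 2) ((2 * n + α + β) * (2 * n + α + β + 2) * x₀) with h | h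
  · exact jacobi_sq_le_at_max hα hβ hm ⟨hl, hr⟩ h fun z hz =>
      hmax' z (Set.Ioo_subset_Icc_self hz)
  · have hneg : ∀ z, jacobiWeight (β + 1 / 2) (α + 1 / 2) z * jacobi β α n z ^ 2 = p (-z) :=
      fun z => by rw [← jacobiWeight_neg, ← jacobi_neg_sq]
    have key := jacobi_sq_le_at_max hβ hα (n := n) (by linarith) (x₀ := -x₀)
      ⟨by linarith, by linarith⟩ (by nlinarith) fun z hz => by
        rw [hneg, hneg, neg_neg]
        exact hmax' (-z) ⟨by linarith [hz.2], by linarith [hz.1]⟩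
    rw [hneg, neg_neg, jacobiNormSq_comm] at key
    refine key.trans_eq ?_
    ring

theorem half_le_rpow {t a : ℝ} (ht : t ∈ Set.Icc (0 : ℝ) 2) (ha0 : 0 ≤ a) (ha1 : a ≤ 1) :
    t / 2 ≤ t ^ a := by
  rcases le_total 1 t with h | h
  · linarith [Real.one_le_rpow h ha0, ht.2]
  · rcases ht.1.eq_or_lt with h0 | h0
    · rw [← h0, zero_div]
      exact Real.rpow_nonneg le_rfl a
    · have := Real.rpow_le_rpow_of_exponent_ge h0 h ha1
      rw [Real.rpow_one] at this
      linarith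

theorem rpow_le_four {t a : ℝ} (ht : t ∈ Set.Icc (0 : ℝ) 2) (ha0 : 0 ≤ a) (ha2 : a ≤ 2) :
    t ^ a ≤ 4 :=
  calc t ^ a ≤ 2 ^ a := Real.rpow_le_rpow ht.1 ht.2 ha0
    _ ≤ 2 ^ (2 : ℝ) := Real.rpow_le_rpow_of_exponent_le one_le_two ha2
    _ = 4 := by norm_num

theorem third_le_jacobiNormSq_zero {α β : ℝ} (hα : 0 ≤ α) (hβ : 0 ≤ β) (hα1 : α ≤ 1)
    (hβ1 : β ≤ 1) : 1 / 3 ≤ jacobiNormSq α β 0 := by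
  have h : ∫ x in (-1 : ℝ)..1, (1 - x ^ 2) / 4 = 1 / 3 := by
    rw [intervalIntegral.integral_div, intervalIntegral.integral_sub (by simp)
      ((continuous_pow 2).intervalIntegrable _ _), integral_pow]
    norm_num
  rw [← h]
  refine intervalIntegral.integral_mono_on (by norm_num)
    (Continuous.intervalIntegrable (by fun_prop) _ _)
    (((continuous_jacobiWeight hα hβ).mul
      ((continuous_jacobi α β 0).pow 2)).intervalIntegrable _ _) fun x hx => ?_
  have h1 := half_le_rpow (t := 1 - x) ⟨by linarith [hx.2], by linarith [hx.1]⟩ hα hα1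
  have h2 := half_le_rpow (t := 1 + x) ⟨by linarith [hx.1], by linarith [hx.2]⟩ hβ hβ1
  rw [jacobi_zero, one_pow, mul_one, jacobiWeight]
  calc (1 - x ^ 2) / 4 = (1 - x) / 2 * ((1 + x) / 2) := by ring
    _ ≤ _ := mul_le_mul h1 h2 (by linarith [hx.1]) (Real.rpow_nonneg (by linarith [hx.2]) _)

theorem jacobiWeight_mul_jacobi_sq_le_norm {α β : ℝ} (hα : 0 ≤ α) (hβ : 0 ≤ β) (n : ℕ)
    {x : ℝ} (hx : x ∈ Set.Icc (-1 : ℝ) 1) :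
    (jacobiWeight (α + 1 / 2) (β + 1 / 2) x * jacobi α β n x ^ 2) ^ 2 ≤
      12000000 * (10 ^ 9) ^ 7 * (2 * n + α + β + 1) * jacobiNormSq α β n ^ 2 := by
  rcases le_or_gt 1 (2 * n + α + β) with hm | hm
  · exact jacobiWeight_mul_jacobi_sq_le hα hβ hm hx
  obtain rfl : n = 0 := by
    by_contra hn
    have : (1 : ℝ) ≤ n := by exact_mod_cast Nat.one_le_iff_ne_zero.2 hn
    linarith
  rw [Nat.cast_zero] at hm ⊢
  have hI := third_le_jacobiNormSq_zero hα hβ (by linarith) (by linarith)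
  have h1 := rpow_le_four (t := 1 - x) (a := α + 1 / 2)
    ⟨by linarith [hx.2], by linarith [hx.1]⟩ (by linarith) (by linarith)
  have h2 := rpow_le_four (t := 1 + x) (a := β + 1 / 2)
    ⟨by linarith [hx.1], by linarith [hx.2]⟩ (by linarith) (by linarith)
  have hw : jacobiWeight (α + 1 / 2) (β + 1 / 2) x ≤ 4 * 4 :=
    mul_le_mul h1 h2 (Real.rpow_nonneg (by linarith [hx.1]) _) (by norm_num)
  rw [jacobi_zero, one_pow, mul_one]
  calc jacobiWeight (α + 1 / 2) (β + 1 / 2) x ^ 2 ≤ (4 * 4) ^ 2 :=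
        pow_le_pow_left₀ (jacobiWeight_nonneg _ _ hx) hw 2
    _ ≤ 12000000 * (10 ^ 9) ^ 7 * 1 * (1 / 3) ^ 2 := by norm_num
    _ ≤ _ := by gcongr; linarith

theorem half_rpow_pow_four {t : ℝ} (ht : 0 ≤ t) (a : ℝ) :
    ((t / 2) ^ (a / 2 + 1 / 4)) ^ 4 = (t ^ (a + 1 / 2)) ^ 2 / ((2 : ℝ) ^ (a + 1 / 2)) ^ 2 := by
  rw [← div_pow, ← Real.div_rpow ht zero_le_two, ← Real.rpow_mul_natCast (by positivity),
    ← Real.rpow_mul_natCast (by positivity)]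
  congr 1
  push_cast
  ring

theorem stmt6 :
    ∃ C : ℝ, 0 < C ∧
      ∀ (α β : ℝ), 0 ≤ α → 0 ≤ β → ∀ (n : ℕ), ∀ x ∈ Set.Icc (-1 : ℝ) 1,
        ((1 - x) / 2) ^ (α / 2 + 1 / 4) * ((1 + x) / 2) ^ (β / 2 + 1 / 4) * |jacobi α β n x|
          ≤ C * (2 * (n : ℝ) + α + β + 1) ^ (-(1 / 4) : ℝ) *
              (Real.Gamma ((n : ℝ) + α + 1) * Real.Gamma ((n : ℝ) + β + 1) /
                  (Real.Gamma ((n : ℝ) + 1) * Real.Gamma ((n : ℝ) + α + β + 1)))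
                ^ ((1 : ℝ) / 2) := by
  refine ⟨10 ^ 20, by norm_num, fun α β hα hβ n x hx => ?_⟩
  have hN : 0 < 2 * (n : ℝ) + α + β + 1 := by positivity
  have hΓ : ∀ s : ℝ, 0 ≤ s → 0 < Real.Gamma (s + 1) := fun s hs =>
    Real.Gamma_pos_of_pos (by linarith)
  have hh : 0 < Real.Gamma ((n : ℝ) + α + 1) * Real.Gamma ((n : ℝ) + β + 1) /
      (Real.Gamma ((n : ℝ) + 1) * Real.Gamma ((n : ℝ) + α + β + 1)) :=
    div_pos (mul_pos (hΓ _ (by positivity)) (hΓ _ (by positivity)))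
      (mul_pos (hΓ _ (by positivity)) (hΓ _ (by positivity)))
  have key := jacobiWeight_mul_jacobi_sq_le_norm hα hβ n hx
  rw [jacobiNormSq_eq hα hβ n] at key
  set N := 2 * (n : ℝ) + α + β + 1
  set h := Real.Gamma ((n : ℝ) + α + 1) * Real.Gamma ((n : ℝ) + β + 1) /
      (Real.Gamma ((n : ℝ) + 1) * Real.Gamma ((n : ℝ) + α + β + 1))
  refine le_of_pow_le_pow_left₀ (n := 4) (by norm_num) (by positivity) ?_
  have hNr : (N ^ (-(1 / 4) : ℝ)) ^ 4 = N⁻¹ := by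
    rw [← Real.rpow_mul_natCast hN.le, ← Real.rpow_neg_one]
    norm_num
  have hhr : (h ^ ((1 : ℝ) / 2)) ^ 4 = h ^ 2 := by
    rw [← Real.rpow_mul_natCast hh.le, ← Real.rpow_natCast h 2]
    norm_num
  have habs : |jacobi α β n x| ^ 4 = (jacobi α β n x ^ 2) ^ 2 := by
    rw [← sq_abs (jacobi α β n x), ← pow_mul]
  have h2 : (2 : ℝ) ^ (α + β + 1) = 2 ^ (α + 1 / 2) * 2 ^ (β + 1 / 2) := by
    rw [← Real.rpow_add two_pos]
    congr 1
    ring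
  rw [mul_pow, mul_pow, mul_pow, mul_pow, hNr, hhr, habs,
    half_rpow_pow_four (by linarith [hx.2]), half_rpow_pow_four (by linarith [hx.1])]
  rw [h2, jacobiWeight] at key
  have hA : (0 : ℝ) < 2 ^ (α + 1 / 2) := by positivity
  have hB : (0 : ℝ) < 2 ^ (β + 1 / 2) := by positivity
  set A : ℝ := 2 ^ (α + 1 / 2)
  set B : ℝ := 2 ^ (β + 1 / 2)
  calc _ = ((1 - x) ^ (α + 1 / 2) * (1 + x) ^ (β + 1 / 2) * jacobi α β n x ^ 2) ^ 2 /
        (A * B) ^ 2 := by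
        field_simp
    _ ≤ 12000000 * (10 ^ 9) ^ 7 * N * (A * B / N * h) ^ 2 / (A * B) ^ 2 := by gcongr
    _ = 12000000 * (10 ^ 9) ^ 7 * N⁻¹ * h ^ 2 := by
        field_simp
    _ ≤ _ := by
        gcongr
        norm_num
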